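/- arXiv:1501.03627 — 10 statements merged into one kernel-verified Lean document; each statement's English description precedes it below -/
import Mathlib

section
/- If the parametrization q is k-times continuously differentiable for some k ≥ 2, then the double layer kernel extends smoothly across the diagonal: there exists a (k−2)-times continuously differentiable function k̃ : ℝ × ℝ → ℝ such that k̃(s,t) = ⟨q(s) − q(t), n(t)⟩/‖q(s) − q(t)‖² whenever q(s) ≠ q(t), and whose diagonal values are k̃(t,t) = (1/2)⟨q''(t), n(t)⟩. In particular, lim_{s→t} k(s,t) = (1/2)⟨q''(t), n(t)⟩ = −κ(t)/2, where κ(t) = −⟨q''(t), n(t)⟩ is the curvature of the curve at q(t). -/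
open Real Filter Topology MeasureTheory intervalIntegral

/-- The two-dimensional double layer kernel
`k(s,t) = ⟨q(s) − q(t), n(t)⟩ / ‖q(s) − q(t)‖²` with outward unit normal
`n(t) = (q'(t)₂, −q'(t)₁)`, written out in coordinates. -/
noncomputable def dlKernel (q : ℝ → EuclideanSpace ℝ (Fin 2)) (s t : ℝ) : ℝ :=
  ((q s 0 - q t 0) * deriv q t 1 - (q s 1 - q t 1) * deriv q t 0) / ‖q s - q t‖ ^ 2

/-- The diagonal value `(1/2)·⟨q''(t), n(t)⟩ = −κ(t)/2` of the continuously
extended double layer kernel. -/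
noncomputable def dlDiag (q : ℝ → EuclideanSpace ℝ (Fin 2)) (t : ℝ) : ℝ :=
  (1 / 2) * (deriv (deriv q) t 0 * deriv q t 1 - deriv (deriv q) t 1 * deriv q t 0)

/-- Weighted average of `g` on the segment from `p.2` to `p.1`. -/
noncomputable def segAvg (w g : ℝ → ℝ) (p : ℝ × ℝ) : ℝ :=
  ∫ u in (0:ℝ)..1, w u * g (p.2 + u * (p.1 - p.2))

lemma segAvg_continuous (w g : ℝ → ℝ) (hw : Continuous w) (hg : Continuous g) :
    Continuous (segAvg w g) := by
  unfold segAvg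
  apply intervalIntegral.continuous_parametric_intervalIntegral_of_continuous'
  simp only [Function.uncurry_def]
  fun_prop

lemma segAvg_hasFDerivAt (w g : ℝ → ℝ) (hw : Continuous w) (hg : ContDiff ℝ 1 g) (p : ℝ × ℝ) :
    HasFDerivAt (segAvg w g)
      (segAvg (fun u => w u * u) (deriv g) p • ContinuousLinearMap.fst ℝ ℝ ℝ
        + segAvg (fun u => w u * (1 - u)) (deriv g) p • ContinuousLinearMap.snd ℝ ℝ ℝ) p := by
  have hg' : Continuous (deriv g) := hg.continuous_deriv le_rfl
  have hgc : Continuous g := hg.continuous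
  set F' : ℝ × ℝ → ℝ → (ℝ × ℝ →L[ℝ] ℝ) := fun p u =>
    (w u * u * deriv g (p.2 + u * (p.1 - p.2))) • ContinuousLinearMap.fst ℝ ℝ ℝ
      + (w u * (1 - u) * deriv g (p.2 + u * (p.1 - p.2))) • ContinuousLinearMap.snd ℝ ℝ ℝ with hF'
  have hcont : Continuous (Function.uncurry F') := by
    simp only [hF', Function.uncurry_def]
    fun_prop
  have hcontp : ∀ p, Continuous (F' p) := fun p => by
    simp only [hF']
    fun_prop
  obtain ⟨C, hC⟩ := ((isCompact_closedBall p (1:ℝ)).prod (isCompact_Icc (a := (0:ℝ)) (b := 1))).exists_bound_of_continuousOn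
    hcont.continuousOn
  have key := intervalIntegral.hasFDerivAt_integral_of_dominated_of_fderiv_le (𝕜 := ℝ)
    (μ := volume) (a := 0) (b := 1) (bound := fun _ => C)
    (F := fun (p : ℝ × ℝ) u => w u * g (p.2 + u * (p.1 - p.2))) (F' := F') (x₀ := p)
    (Metric.closedBall_mem_nhds p one_pos)
    (Eventually.of_forall fun p => by
      apply Continuous.aestronglyMeasurable; fun_prop)
    (by apply Continuous.intervalIntegrable; fun_prop)
    (hcontp p).aestronglyMeasurable
    (Eventually.of_forall fun u hu x hx => hC (x, u) ⟨hx, by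
      rw [Set.uIoc_of_le zero_le_one] at hu; exact ⟨hu.1.le, hu.2⟩⟩)
    (by simp)
    (Eventually.of_forall fun u hu x hx => by
      have h1 : HasDerivAt g (deriv g (x.2 + u * (x.1 - x.2))) (x.2 + u * (x.1 - x.2)) :=
        (hg.differentiable one_ne_zero _).hasDerivAt
      have h2 : HasFDerivAt (fun x : ℝ × ℝ => x.2 + u * (x.1 - x.2))
        (ContinuousLinearMap.snd ℝ ℝ ℝ + u • (ContinuousLinearMap.fst ℝ ℝ ℝ - ContinuousLinearMap.snd ℝ ℝ ℝ)) x :=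
        hasFDerivAt_snd.add ((hasFDerivAt_fst.sub hasFDerivAt_snd).const_mul u)
      have h3 := (h1.comp_hasFDerivAt x h2).const_mul (w u)
      refine h3.congr_fderiv ?_
      ext <;> simp [hF'] <;> ring)
  refine HasFDerivAt.congr_fderiv (f := segAvg w g) key ?_
  simp only [hF', segAvg]
  rw [intervalIntegral.integral_add, intervalIntegral.integral_smul_const,
    intervalIntegral.integral_smul_const]
  · apply Continuous.intervalIntegrable; fun_prop
  · apply Continuous.intervalIntegrable; fun_prop

lemma segAvg_contDiff (n : ℕ) : ∀ (w g : ℝ → ℝ), Continuous w → ContDiff ℝ n g →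
    ContDiff ℝ n (segAvg w g) := by
  induction n with
  | zero =>
    intro w g hw hg
    exact contDiff_zero.2 (segAvg_continuous w g hw hg.continuous)
  | succ n ih =>
    intro w g hw hg
    have hg1 : ContDiff ℝ 1 g := hg.of_le (by exact_mod_cast Nat.le_add_left 1 n)
    have hg' : ContDiff ℝ n (deriv g) := by
      push_cast at hg
      exact (contDiff_succ_iff_deriv.1 hg).2.2
    push_cast
    rw [contDiff_succ_iff_hasFDerivAt]
    refine ⟨_, ?_, fun p => segAvg_hasFDerivAt w g hw hg1 p⟩
    have h1 := ih (fun u => w u * u) (deriv g) (by fun_prop) hg'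
    have h2 := ih (fun u => w u * (1 - u)) (deriv g) (by fun_prop) hg'
    exact (h1.smul contDiff_const).add (h2.smul contDiff_const)

lemma taylor_one (x : ℝ → ℝ) (hx : ContDiff ℝ 1 x) (s t : ℝ) :
    x s - x t = (s - t) * segAvg (fun _ => 1) (deriv x) (s, t) := by
  have hx' : Continuous (deriv x) := hx.continuous_deriv le_rfl
  have h := intervalIntegral.integral_eq_sub_of_hasDerivAt (a := 0) (b := 1)
    (f := fun u => x (t + u * (s - t))) (f' := fun u => (s - t) * (1 * deriv x (t + u * (s - t))))
    (fun u _ => by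
      have h2 : HasDerivAt (fun u : ℝ => t + u * (s - t)) (1 * (s - t)) u :=
        ((hasDerivAt_id u).mul_const (s - t)).const_add t
      have h1 := ((hx.differentiable one_ne_zero (t + u * (s - t))).hasDerivAt).comp u h2
      refine h1.congr_deriv ?_
      ring)
    (by apply Continuous.intervalIntegrable; fun_prop)
  rw [intervalIntegral.integral_const_mul] at h
  simp only [segAvg]
  rw [h]
  simp

lemma taylor_two (x : ℝ → ℝ) (hx : ContDiff ℝ 2 x) (s t : ℝ) :
    x s - x t - (s - t) * deriv x t
      = (s - t) ^ 2 * segAvg (fun u => 1 - u) (deriv (deriv x)) (s, t) := by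
  have hx' : ContDiff ℝ 1 (deriv x) := by
    have : ContDiff ℝ (1 + 1) x := by simpa [one_add_one_eq_two] using hx
    exact (contDiff_succ_iff_deriv.1 this).2.2
  have hx'' : Continuous (deriv (deriv x)) := hx'.continuous_deriv le_rfl
  have h := intervalIntegral.integral_eq_sub_of_hasDerivAt (a := 0) (b := 1)
    (f := fun u => (1 - u) * deriv x (t + u * (s - t)) * (s - t) + x (t + u * (s - t)))
    (f' := fun u => (s - t) ^ 2 * ((1 - u) * deriv (deriv x) (t + u * (s - t))))
    (fun u _ => by
      have h2 : HasDerivAt (fun u : ℝ => t + u * (s - t)) (1 * (s - t)) u :=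
        ((hasDerivAt_id u).mul_const (s - t)).const_add t
      have h1 : HasDerivAt (fun u => x (t + u * (s - t))) _ u :=
        ((hx.differentiable two_ne_zero (t + u * (s - t))).hasDerivAt).comp u h2
      have h3 : HasDerivAt (fun u => deriv x (t + u * (s - t)))
          (deriv (deriv x) (t + u * (s - t)) * (1 * (s - t))) u :=
        HasDerivAt.comp (h₂ := deriv x) u ((hx'.differentiable one_ne_zero (t + u * (s - t))).hasDerivAt) h2
      have h4 : HasDerivAt (fun u : ℝ => 1 - u) (-1) u := (hasDerivAt_id u).const_sub 1
      refine (((h4.mul h3).mul_const (s - t)).add h1).congr_deriv ?_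
      ring)
    (by apply Continuous.intervalIntegrable; fun_prop)
  rw [intervalIntegral.integral_const_mul] at h
  simp only [segAvg]
  rw [h]
  simp
  ring

/-- Points with equal image differ by an integer multiple of the period. -/
lemma period_of_eq (L : ℝ) (hL : 0 < L) (q : ℝ → EuclideanSpace ℝ (Fin 2))
    (hper : Function.Periodic q L) (hinj : Set.InjOn q (Set.Ico 0 L)) (s t : ℝ)
    (h : q s = q t) : ∃ m : ℤ, s = t + m * L := by
  have h1 : ∀ s, q (toIcoMod hL 0 s) = q s := fun s => by
    rw [← self_sub_toIcoDiv_zsmul, hper.sub_zsmul_eq]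
  have h2 : ∀ s, toIcoMod hL 0 s ∈ Set.Ico 0 L := fun s => by
    simpa using toIcoMod_mem_Ico hL 0 s
  have h3 := hinj (h2 s) (h2 t) (by rw [h1, h1, h])
  rw [← self_sub_toIcoDiv_zsmul, ← self_sub_toIcoDiv_zsmul] at h3
  refine ⟨toIcoDiv hL 0 s - toIcoDiv hL 0 t, ?_⟩
  simp only [zsmul_eq_mul] at h3
  push_cast
  linarith

theorem double_layer_kernel_smooth_extension
    (L : ℝ) (hL : 0 < L) (k : ℕ) (hk : 2 ≤ k)
    (q : ℝ → EuclideanSpace ℝ (Fin 2))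
    (hq : ContDiff ℝ k q)
    (hper : ∀ s, q (s + L) = q s)
    (hunit : ∀ s, ‖deriv q s‖ = 1)
    (hinj : Set.InjOn q (Set.Ico 0 L)) :
    ∃ ktil : ℝ → ℝ → ℝ,
      ContDiff ℝ (k - 2 : ℕ) (fun p : ℝ × ℝ => ktil p.1 p.2) ∧
      (∀ s t, q s ≠ q t → ktil s t = dlKernel q s t) ∧
      (∀ t, ktil t t = dlDiag q t) ∧
      (∀ t : ℝ, Tendsto (fun s => dlKernel q s t) (𝓝[≠] t) (𝓝 (dlDiag q t))) := by
  obtain ⟨n, rfl⟩ : ∃ n, k = n + 2 := ⟨k - 2, by omega⟩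
  rw [Nat.add_sub_cancel]
  have hP : Function.Periodic q L := hper
  have hqn : ContDiff ℝ ((n + 1 : ℕ) + 1) q := by
    refine hq.of_le (le_of_eq ?_); push_cast; rw [add_assoc, one_add_one_eq_two]
  have hdq : ContDiff ℝ (n + 1 : ℕ) (deriv q) := (contDiff_succ_iff_deriv.1 hqn).2.2
  have hddq : ContDiff ℝ n (deriv (deriv q)) := by
    push_cast at hdq; exact (contDiff_succ_iff_deriv.1 hdq).2.2
  have hdqn : ContDiff ℝ n (deriv q) := hdq.of_le (by exact_mod_cast Nat.le_succ n)
  have hqn' : ContDiff ℝ n q := hq.of_le (by exact_mod_cast Nat.le_add_right n 2)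
  have dcoord : ∀ (f : ℝ → EuclideanSpace ℝ (Fin 2)) (_ : Differentiable ℝ f) (i : Fin 2),
      deriv (fun s => f s i) = fun s => deriv f s i := fun f hf i => by
    ext s
    exact (hasDerivAt_pi.1 ((PiLp.continuousLinearEquiv 2 ℝ (fun _ : Fin 2 => ℝ)).toContinuousLinearMap.hasFDerivAt.comp_hasDerivAt s (hf s).hasDerivAt) i).deriv
  have hqd : Differentiable ℝ q := hq.differentiable (by positivity)
  have hdqd : Differentiable ℝ (deriv q) := hdq.differentiable (by positivity)
  have d1 : ∀ i, deriv (fun s => q s i) = fun s => deriv q s i := dcoord q hqd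
  have d2 : ∀ i, deriv (deriv (fun s => q s i)) = fun s => deriv (deriv q) s i := fun i => by
    rw [d1, dcoord _ hdqd]
  have c2 : ∀ i, ContDiff ℝ 2 (fun s => q s i) := fun i =>
    contDiff_euclidean.1 (hq.of_le (by exact_mod_cast Nat.le_add_left 2 n)) i
  set A : Fin 2 → ℝ × ℝ → ℝ := fun i => segAvg (fun _ => 1) (fun s => deriv q s i) with hA
  set B : Fin 2 → ℝ × ℝ → ℝ := fun i => segAvg (fun u => 1 - u) (fun s => deriv (deriv q) s i)
    with hB
  have T1 : ∀ i s t, q s i - q t i = (s - t) * A i (s, t) := fun i s t => by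
    have := taylor_one (fun s => q s i) ((c2 i).of_le (by norm_num)) s t
    rwa [d1] at this
  have T2 : ∀ i s t, q s i - q t i - (s - t) * deriv q t i = (s - t) ^ 2 * B i (s, t) :=
    fun i s t => by
    have := taylor_two (fun s => q s i) (c2 i) s t
    rwa [d2, d1] at this
  have hAc : ∀ i, ContDiff ℝ n (A i) := fun i =>
    segAvg_contDiff n _ _ continuous_const (contDiff_euclidean.1 hdqn i)
  have hBc : ∀ i, ContDiff ℝ n (B i) := fun i =>
    segAvg_contDiff n _ _ (by fun_prop) (contDiff_euclidean.1 hddq i)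
  set D : ℝ × ℝ → ℝ := fun p => A 0 p ^ 2 + A 1 p ^ 2 with hD
  set N : ℝ × ℝ → ℝ := fun p => B 0 p * deriv q p.2 1 - B 1 p * deriv q p.2 0 with hN
  have hDc : ContDiff ℝ n D := ((hAc 0).pow 2).add ((hAc 1).pow 2)
  have hcoord : ∀ i, ContDiff ℝ n (fun p : ℝ × ℝ => deriv q p.2 i) := fun i =>
    (contDiff_euclidean.1 hdqn i).comp contDiff_snd
  have hNc : ContDiff ℝ n N :=
    ((hBc 0).mul (hcoord 1)).sub ((hBc 1).mul (hcoord 0))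
  have hnorm : ∀ s t, ‖q s - q t‖ ^ 2 = (s - t) ^ 2 * D (s, t) := fun s t => by
    rw [EuclideanSpace.real_norm_sq_eq]
    simp only [Fin.sum_univ_two, PiLp.sub_apply, T1, hD]
    ring
  have hker : ∀ s t, s ≠ t → dlKernel q s t = N (s, t) / D (s, t) := fun s t hst => by
    have : (q s 0 - q t 0) * deriv q t 1 - (q s 1 - q t 1) * deriv q t 0
        = (s - t) ^ 2 * N (s, t) := by
      simp only [hN]
      linear_combination deriv q t 1 * T2 0 s t - deriv q t 0 * T2 1 s t
    rw [dlKernel, this, hnorm, mul_div_mul_left _ _ (pow_ne_zero 2 (sub_ne_zero.2 hst))]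
  have hDd : ∀ t, D (t, t) = 1 := fun t => by
    have h := EuclideanSpace.real_norm_sq_eq (deriv q t)
    rw [hunit, Fin.sum_univ_two] at h
    simp [hD, hA, segAvg]
    linarith
  have hNd : ∀ t, N (t, t) = dlDiag q t := fun t => by
    have : (∫ u in (0:ℝ)..1, (1 - u)) = 1 / 2 := by
      rw [intervalIntegral.integral_sub (by simp) (by simp)]
      simp; norm_num
    simp [hN, hB, segAvg, dlDiag, this]
    ring
  have hdiag : ∀ t, N (t, t) / D (t, t) = dlDiag q t := fun t => by rw [hDd, hNd, div_one]
  have hqne : ∀ s t, D (s, t) ≠ 0 → (q s = q t ↔ s = t) := fun s t h => by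
    refine ⟨fun e => ?_, fun e => by rw [e]⟩
    have := hnorm s t
    rw [e] at this
    simp [h, sub_eq_zero] at this
    exact this
  have hDne : ∀ t, ∀ᶠ p in 𝓝 ((t, t) : ℝ × ℝ), D p ≠ 0 := fun t =>
    hDc.continuous.continuousAt.eventually_ne (by rw [hDd]; exact one_ne_zero)
  classical
  refine ⟨fun s t => if q s = q t then dlDiag q t else dlKernel q s t, ?_, ?_, ?_, ?_⟩
  · rw [contDiff_iff_contDiffAt]
    rintro ⟨s, t⟩
    by_cases hst : q s = q t
    · obtain ⟨m, rfl⟩ := period_of_eq L hL q hP hinj s t hst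
      have hsh : ∀ s, q (s - m * L) = q s := fun s => by
        simpa using hP.sub_zsmul_eq (x := s) m
      have hφ : ContDiff ℝ n (fun p : ℝ × ℝ => ((p.1 - m * L, p.2) : ℝ × ℝ)) := by fun_prop
      have hφt : (fun p : ℝ × ℝ => ((p.1 - m * L, p.2) : ℝ × ℝ)) (t + m * L, t) = (t, t) := by
        simp
      have hsm : ContDiffAt ℝ n (fun p : ℝ × ℝ => N (p.1 - m * L, p.2) / D (p.1 - m * L, p.2))
          (t + m * L, t) := by
        refine ((hNc.comp hφ).contDiffAt).div ((hDc.comp hφ).contDiffAt) ?_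
        simp [hDd]
      refine hsm.congr_of_eventuallyEq ?_
      have hev : ∀ᶠ p in 𝓝 ((t + m * L, t) : ℝ × ℝ), D (p.1 - m * L, p.2) ≠ 0 := by
        refine (hDc.comp hφ).continuous.continuousAt.eventually_ne ?_
        simp [hDd]
      filter_upwards [hev] with p hp
      have e1 := hqne _ _ hp
      rw [hsh] at e1
      have e2 : dlKernel q p.1 p.2 = dlKernel q (p.1 - m * L) p.2 := by
        simp only [dlKernel, hsh]
      by_cases hh : p.1 - m * L = p.2
      · rw [if_pos (e1.2 hh), hh, hdiag]
      · rw [if_neg (fun h => hh (e1.1 h)), e2, hker _ _ hh]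
    · have hqc : Continuous q := hq.continuous
      have hev : ∀ᶠ p in 𝓝 ((s, t) : ℝ × ℝ), q p.1 ≠ q p.2 :=
        (isOpen_ne_fun (by fun_prop) (by fun_prop)).mem_nhds hst
      have hst2 : s ≠ t := fun h => hst (by rw [h])
      have hev2 : ∀ᶠ p in 𝓝 ((s, t) : ℝ × ℝ), p.1 ≠ p.2 :=
        hev.mono fun p hp h => hp (by rw [h])
      have hDst : D (s, t) ≠ 0 := fun h => by
        have := hnorm s t
        rw [h, mul_zero] at this
        exact hst (sub_eq_zero.1 (by simpa using this))
      refine (hNc.contDiffAt.div hDc.contDiffAt hDst).congr_of_eventuallyEq ?_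
      filter_upwards [hev, hev2] with p hp hp2
      rw [if_neg hp, hker _ _ hp2]
      rfl
  · intro s t hst
    simp [hst]
  · intro t
    simp
  · intro t
    have hc : ContinuousAt (fun s => N (s, t) / D (s, t)) t := by
      have h1 := hNc.continuous
      have h2 := hDc.continuous
      refine ContinuousAt.div (by fun_prop) (by fun_prop) ?_
      rw [hDd]; exact one_ne_zero
    have h := hc.tendsto
    rw [hdiag] at h
    refine (h.mono_left nhdsWithin_le_nhds).congr' ?_
    filter_upwards [self_mem_nhdsWithin] with s hs
    exact (hker s t hs).symm
end

section
/- The double layer potential of the constant function 1 equals −1 on the boundary: for every s ∈ ℝ, (1/π) ∫₀^L k(s,t) dt = −1, where the integral is understood using the continuous extension of the kernel k across the diagonal. -/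
open Real Filter Topology MeasureTheory intervalIntegral

lemma dl_exp_log {z z' : ℝ → ℂ} (hz : ∀ t, HasDerivAt z (z' t) t) (hz' : Continuous z')
    {a b : ℝ} (hab : a ≤ b) (hne : ∀ t ∈ Set.Icc a b, z t ≠ 0) :
    Complex.exp (∫ t in a..b, z' t / z t) = z b / z a := by
  have hzc : Continuous z := continuous_iff_continuousAt.2 fun t => (hz t).continuousAt
  have hfc : ContinuousOn (fun t => z' t / z t) (Set.Icc a b) :=
    hz'.continuousOn.div hzc.continuousOn hne
  have hint : IntervalIntegrable (fun t => z' t / z t) volume a b :=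
    hfc.intervalIntegrable_of_Icc hab
  set P : ℝ → ℂ := fun x => ∫ t in a..x, z' t / z t with hP
  have hPc : ContinuousOn P (Set.Icc a b) := by
    have := intervalIntegral.continuousOn_primitive_interval' hint Set.left_mem_uIcc
    rwa [Set.uIcc_of_le hab] at this
  have hderiv : ∀ x ∈ Set.Ioo a b, HasDerivAt P (z' x / z x) x := by
    intro x hx
    apply intervalIntegral.integral_hasDerivAt_right
    · exact hint.mono_set (by
        rw [Set.uIcc_of_le hx.1.le, Set.uIcc_of_le hab]; exact Set.Icc_subset_Icc_right hx.2.le)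
    · exact (hfc.mono Set.Ioo_subset_Icc_self).stronglyMeasurableAtFilter isOpen_Ioo x hx
    · exact hfc.continuousAt (Icc_mem_nhds hx.1 hx.2)
  have hconst : ∀ x ∈ Set.Icc a b, z x * Complex.exp (-P x) = z a * Complex.exp (-P a) := by
    apply constant_of_has_deriv_right_zero
    · exact hzc.continuousOn.mul (Complex.continuous_exp.comp_continuousOn hPc.neg)
    · intro x hx
      rcases eq_or_lt_of_le hx.1 with h | h
      · subst h
        have hd : HasDerivWithinAt P (z' a / z a) (Set.Ici a) a := by
          apply intervalIntegral.integral_hasDerivWithinAt_right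
          · simp
          · exact (hfc.mono Set.Ioc_subset_Icc_self).stronglyMeasurableAtFilter_nhdsWithin
              measurableSet_Ioc a |>.filter_mono (by
                rw [nhdsWithin_Ioc_eq_nhdsGT hx.2])
          · have := hfc a ⟨le_rfl, hab⟩
            exact this.mono_of_mem_nhdsWithin (Icc_mem_nhdsGT hx.2)
        have := (hz a).hasDerivWithinAt (s := Set.Ici a) |>.mul hd.neg.cexp
        have h0 := hne a ⟨le_rfl, hab⟩
        refine this.congr_deriv ?_
        field_simp
        ring
      · have hd := hderiv x ⟨h, hx.2⟩
        have := ((hz x).mul hd.neg.cexp).hasDerivWithinAt (s := Set.Ici x)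
        have h0 := hne x ⟨h.le, hx.2.le⟩
        refine this.congr_deriv ?_
        field_simp
        ring
  have h1 := hconst b ⟨hab, le_rfl⟩
  have h2 : P a = 0 := by simp [hP]
  have h3 : z a ≠ 0 := hne a ⟨le_rfl, hab⟩
  rw [h2, Complex.exp_neg] at h1
  have h4 := Complex.exp_ne_zero (P b)
  change Complex.exp (P b) = _
  simp at h1
  field_simp at h1 ⊢
  rw [h1]

lemma dl_exp_angle {z z' : ℝ → ℂ} (hz : ∀ t, HasDerivAt z (z' t) t) (hz' : Continuous z')
    {a b : ℝ} (hab : a ≤ b) (hne : ∀ t ∈ Set.Icc a b, z t ≠ 0) (g : ℝ → ℝ)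
    (hg : ∀ t ∈ Set.Icc a b, g t = -(z' t / z t).im) :
    Complex.exp (Complex.I * ((-∫ t in a..b, g t : ℝ) : ℂ)) =
      (z b / z a) / ((‖z b / z a‖ : ℝ) : ℂ) := by
  have hzc : Continuous z := continuous_iff_continuousAt.2 fun t => (hz t).continuousAt
  have hfc : ContinuousOn (fun t => z' t / z t) (Set.Icc a b) :=
    hz'.continuousOn.div hzc.continuousOn hne
  have hint : IntervalIntegrable (fun t => z' t / z t) volume a b :=
    hfc.intervalIntegrable_of_Icc hab
  have h1 : (-∫ t in a..b, g t) = (∫ t in a..b, z' t / z t).im := by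
    have h := Complex.imCLM.intervalIntegral_comp_comm hint
    simp only [Complex.imCLM_apply] at h
    rw [← h, ← intervalIntegral.integral_neg]
    apply intervalIntegral.integral_congr
    intro t ht
    rw [Set.uIcc_of_le hab] at ht
    simp [hg t ht]
  rw [h1, ← dl_exp_log hz hz' hab hne]
  set w := ∫ t in a..b, z' t / z t
  rw [Complex.norm_exp, Complex.ofReal_exp, ← Complex.exp_sub]
  congr 1
  apply Complex.ext <;> simp

lemma dl_const {f : ℝ → ℝ} (hf : Continuous f) {S : Set ℝ} (hS : IsPreconnected S) (c : ℂ)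
    (h : ∀ x ∈ S, Complex.exp (Complex.I * (f x : ℂ)) = c) {x y : ℝ} (hx : x ∈ S) (hy : y ∈ S) :
    f x = f y := by
  have hd : DiscreteTopology (Set.range ((↑) : ℤ → ℝ)) :=
    (Int.isClosedEmbedding_coe_real.isEmbedding.toHomeomorph).symm.isEmbedding.discreteTopology
  have key := hS.eqOn_const_of_mapsTo (T := Set.range ((↑) : ℤ → ℝ))
    (f := fun u => (f u - f x) / (2 * π)) ⟨hd⟩ (by fun_prop) (by
      intro u hu
      have := (h u hu).trans (h x hx).symm
      rw [Complex.exp_eq_exp_iff_exists_int] at this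
      obtain ⟨n, hn⟩ := this
      refine ⟨n, ?_⟩
      have h2 : (f u : ℂ) = f x + n * (2 * π) := by
        apply mul_left_cancel₀ Complex.I_ne_zero
        rw [hn]; ring
      have h3 : f u = f x + n * (2 * π) := by exact_mod_cast h2
      show (n : ℝ) = (f u - f x) / (2 * π)
      rw [h3]; field_simp; ring) ⟨0, 0, by simp⟩
  obtain ⟨n, -, hn⟩ := key
  have h1 := hn hx
  have h2 := hn hy
  simp only [Function.const] at h1 h2
  rw [← h1] at h2
  have := pi_pos
  field_simp at h2
  linarith

lemma dl_swap {f : ℝ → ℝ → ℝ} (hf : Continuous (fun p : ℝ × ℝ => f p.1 p.2)) (a b c d : ℝ) :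
    ∫ x in a..b, ∫ y in c..d, f x y = ∫ y in c..d, ∫ x in a..b, f x y := by
  apply MeasureTheory.intervalIntegral_intervalIntegral_swap
  refine IntegrableOn.mono_set ?_ (Set.prod_mono Set.uIoc_subset_uIcc Set.uIoc_subset_uIcc)
  exact ContinuousOn.integrableOn_compact (isCompact_uIcc.prod isCompact_uIcc)
    hf.continuousOn

/-- The double layer potential of the constant function 1 equals −1 on the boundary:
for every `s`, `(1/π) ∫₀^L k̃(s,t) dt = −1`, where `k̃` is the continuous extension of the
double layer kernel across the diagonal. -/
theorem double_layer_potential_of_one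
    (L : ℝ) (hL : 0 < L)
    (q : ℝ → EuclideanSpace ℝ (Fin 2))
    (hq : ContDiff ℝ 2 q)
    (hper : ∀ s, q (s + L) = q s)
    (hunit : ∀ s, ‖deriv q s‖ = 1)
    (hinj : Set.InjOn q (Set.Ico 0 L))
    (horient : (∫ t in (0:ℝ)..L,
      (deriv (deriv q) t 1 * deriv q t 0 - deriv (deriv q) t 0 * deriv q t 1)) = 2 * π)
    (ktil : ℝ → ℝ → ℝ)
    (hcont : Continuous (fun p : ℝ × ℝ => ktil p.1 p.2))
    (hoff : ∀ s t, q s ≠ q t → ktil s t = dlKernel q s t)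
    (hdiag : ∀ t, ktil t t = dlDiag q t) :
    ∀ s : ℝ, ((1 / π) * ∫ t in (0:ℝ)..L, ktil s t) = -1 := by
  -- basic derivative facts
  have hd : ∀ t, HasDerivAt q (deriv q t) t := fun t =>
    (hq.differentiable (by norm_num)).differentiableAt.hasDerivAt
  have hdc : Continuous (deriv q) := hq.continuous_deriv (by norm_num)
  have hdi : ∀ i t, HasDerivAt (fun u => q u i) (deriv q t i) t := by
    intro i t
    exact (EuclideanSpace.proj (𝕜 := ℝ) i).hasFDerivAt.comp_hasDerivAt t (hd t)
  have hdci : ∀ i, Continuous (fun t => deriv q t i) := fun i =>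
    (EuclideanSpace.proj (𝕜 := ℝ) i).continuous.comp hdc
  have hdper : ∀ t, deriv q (t + L) = deriv q t := by
    intro t
    rw [← deriv_comp_add_const]
    congr 1
    funext u
    exact hper u
  -- complex curve
  set Q : ℝ → ℂ := fun t => (q t 0 : ℂ) + (q t 1 : ℂ) * Complex.I with hQ
  set Q' : ℝ → ℂ := fun t => (deriv q t 0 : ℂ) + (deriv q t 1 : ℂ) * Complex.I with hQ'
  have hQd : ∀ t, HasDerivAt Q (Q' t) t := fun t =>
    (hdi 0 t).ofReal_comp.add ((hdi 1 t).ofReal_comp.mul_const Complex.I)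
  have hQ'c : Continuous Q' :=
    (Complex.continuous_ofReal.comp (hdci 0)).add
      ((Complex.continuous_ofReal.comp (hdci 1)).mul continuous_const)
  have hQre : ∀ t, (Q t).re = q t 0 := by intro t; simp [hQ]
  have hQim : ∀ t, (Q t).im = q t 1 := by intro t; simp [hQ]
  have hQ're : ∀ t, (Q' t).re = deriv q t 0 := by intro t; simp [hQ']
  have hQ'im : ∀ t, (Q' t).im = deriv q t 1 := by intro t; simp [hQ']
  have hQper : ∀ t, Q (t + L) = Q t := by intro t; simp only [hQ, hper]
  have hQ'ne : ∀ t, Q' t ≠ 0 := by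
    intro t h
    have h0 : deriv q t 0 = 0 := by rw [← hQ're, h]; rfl
    have h1 : deriv q t 1 = 0 := by rw [← hQ'im, h]; rfl
    have h2 : deriv q t = 0 := by
      ext i; fin_cases i
      · simpa using h0
      · simpa using h1
    have := hunit t
    rw [h2] at this
    simp at this
  have hQne : ∀ s t, q s ≠ q t → Q t - Q s ≠ 0 := by
    intro s t hst h
    apply hst
    have h' : Q t = Q s := sub_eq_zero.1 h
    ext i; fin_cases i
    · have := congrArg Complex.re h'
      rw [hQre, hQre] at this
      simpa using this.symm
    · have := congrArg Complex.im h'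
      rw [hQim, hQim] at this
      simpa using this.symm
  have hker : ∀ s t, q s ≠ q t → ktil s t = -(Q' t / (Q t - Q s)).im := by
    intro s t hst
    rw [hoff s t hst, dlKernel, Complex.div_im]
    have hn : ‖q s - q t‖ ^ 2 = Complex.normSq (Q t - Q s) := by
      rw [EuclideanSpace.norm_sq_eq, Complex.normSq_apply]
      simp only [Fin.sum_univ_two, Complex.sub_re, Complex.sub_im, hQre, hQim, Real.norm_eq_abs,
        sq_abs, PiLp.sub_apply]
      ring
    have hpos : Complex.normSq (Q t - Q s) ≠ 0 := by
      simpa using hQne s t hst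
    rw [hn]
    simp only [Complex.sub_re, Complex.sub_im, hQre, hQim, hQ're, hQ'im] at hpos ⊢
    ring
  -- injectivity modulo the period
  have hne : ∀ s t, s < t → t < s + L → q s ≠ q t := by
    intro s t h1 h2 h
    have hp : Function.Periodic q L := hper
    have hm : ∀ x, q (toIcoMod hL 0 x) = q x := by
      intro x
      rw [toIcoMod]
      exact hp.sub_zsmul_eq _
    have he : toIcoMod hL 0 s = toIcoMod hL 0 t := by
      apply hinj
      · simpa using toIcoMod_mem_Ico hL 0 s
      · simpa using toIcoMod_mem_Ico hL 0 t
      · rw [hm, hm, h]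
    rw [toIcoMod, toIcoMod] at he
    simp only [zsmul_eq_mul] at he
    have h3 : t - s = ((toIcoDiv hL 0 t - toIcoDiv hL 0 s : ℤ) : ℝ) * L := by
      push_cast; linarith
    set n := toIcoDiv hL 0 t - toIcoDiv hL 0 s
    have h4 : (0 : ℝ) < n := by
      by_contra hcon
      push Not at hcon
      nlinarith
    have h5 : (n : ℝ) < 1 := by
      by_contra hcon
      push Not at hcon
      nlinarith
    have h6 : 0 < n := by exact_mod_cast h4
    have h7 : n < 1 := by exact_mod_cast h5
    omega
  have hne_near : ∀ s t, q s = q t → ∀ᶠ u in 𝓝[>] t, q s ≠ q u := by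
    intro s t h
    have : Set.Ioo t (t + L) ∈ 𝓝[>] t := Ioo_mem_nhdsGT (by linarith)
    filter_upwards [this] with u hu
    rw [h]
    exact hne t u hu.1 hu.2
  have hc2 : ∀ s, Continuous (fun t => ktil s t) := fun s =>
    hcont.comp (Continuous.prodMk continuous_const continuous_id)
  have hc1 : ∀ t, Continuous (fun s => ktil s t) := fun t =>
    hcont.comp (Continuous.prodMk continuous_id continuous_const)
  have hp2 : ∀ s t, ktil s (t + L) = ktil s t := by
    intro s t
    have hreg : ∀ u, q s ≠ q u → ktil s (u + L) = ktil s u := by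
      intro u hu
      rw [hoff s u hu, hoff s (u + L) (by rwa [hper]), dlKernel, dlKernel, hper, hdper]
    by_cases h : q s = q t
    · have hA : Tendsto (fun u => ktil s (u + L)) (𝓝[>] t) (𝓝 (ktil s (t + L))) :=
        (((hc2 s).comp (continuous_add_const L)).tendsto t).mono_left nhdsWithin_le_nhds
      have hB : Tendsto (fun u => ktil s u) (𝓝[>] t) (𝓝 (ktil s t)) :=
        ((hc2 s).tendsto t).mono_left nhdsWithin_le_nhds
      refine tendsto_nhds_unique (hA.congr' ?_) hB
      filter_upwards [hne_near s t h] with u hu using hreg u hu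
    · exact hreg t h
  have hp1 : ∀ s t, ktil (s + L) t = ktil s t := by
    intro s t
    have hreg : ∀ u, q u ≠ q t → ktil (u + L) t = ktil u t := by
      intro u hu
      rw [hoff u t hu, hoff (u + L) t (by rwa [hper]), dlKernel, dlKernel, hper]
    by_cases h : q s = q t
    · have hA : Tendsto (fun u => ktil (u + L) t) (𝓝[>] s) (𝓝 (ktil (s + L) t)) :=
        (((hc1 t).comp (continuous_add_const L)).tendsto s).mono_left nhdsWithin_le_nhds
      have hB : Tendsto (fun u => ktil u t) (𝓝[>] s) (𝓝 (ktil s t)) :=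
        ((hc1 t).tendsto s).mono_left nhdsWithin_le_nhds
      refine tendsto_nhds_unique (hA.congr' ?_) hB
      filter_upwards [hne_near t s h.symm] with u hu using hreg u hu.symm
    · exact hreg s h
  have hi2 : ∀ s a b, IntervalIntegrable (fun t => ktil s t) volume a b := fun s a b =>
    (hc2 s).intervalIntegrable a b
  -- the two functions
  set F : ℝ → ℝ := fun s => ∫ t in (0:ℝ)..L, ktil s t with hF
  have hFc : Continuous F :=
    intervalIntegral.continuous_parametric_intervalIntegral_of_continuous' hcont 0 L
  have hFs : ∀ s, F s = ∫ t in s..s + L, ktil s t := by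
    intro s
    have hp : Function.Periodic (fun t => ktil s t) L := hp2 s
    have := hp.intervalIntegral_add_eq 0 s
    rw [zero_add] at this
    exact this
  have hFexp : ∀ s, Complex.exp (Complex.I * ((-F s : ℝ) : ℂ)) = -1 := by
    intro s
    have hev : ∀ᶠ e in 𝓝[>] (0:ℝ), Complex.exp (Complex.I *
        ((-∫ t in (s + e)..(s + L - e), ktil s t : ℝ) : ℂ)) =
        ((Q (s + L - e) - Q s) / (Q (s + e) - Q s)) /
          ((‖(Q (s + L - e) - Q s) / (Q (s + e) - Q s)‖ : ℝ) : ℂ) := by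
      have : Set.Ioo 0 (L / 2) ∈ 𝓝[>] (0:ℝ) := Ioo_mem_nhdsGT (by linarith)
      filter_upwards [this] with e he
      have h1 := he.1
      have h2 := he.2
      have hqe : ∀ t ∈ Set.Icc (s + e) (s + L - e), q s ≠ q t := fun t ht =>
        hne s t (by linarith [ht.1]) (by linarith [ht.2])
      exact dl_exp_angle (z := fun t => Q t - Q s) (z' := Q')
        (fun t => (hQd t).sub_const _) hQ'c (by linarith)
        (fun t ht => hQne s t (hqe t ht)) (fun t => ktil s t)
        (fun t ht => hker s t (hqe t ht))
    have hlim1 : Tendsto (fun e : ℝ => Complex.exp (Complex.I *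
        ((-∫ t in (s + e)..(s + L - e), ktil s t : ℝ) : ℂ))) (𝓝[>] 0)
        (𝓝 (Complex.exp (Complex.I * ((-F s : ℝ) : ℂ)))) := by
      have hcontE : Continuous (fun e : ℝ => ∫ t in (s + e)..(s + L - e), ktil s t) := by
        have hP : Continuous (fun x => ∫ t in (0:ℝ)..x, ktil s t) :=
          intervalIntegral.continuous_primitive (hi2 s) 0
        have : (fun e : ℝ => ∫ t in (s + e)..(s + L - e), ktil s t) =
            fun e => (∫ t in (0:ℝ)..(s + L - e), ktil s t) - ∫ t in (0:ℝ)..(s + e), ktil s t := by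
          funext e
          rw [intervalIntegral.integral_interval_sub_left (hi2 s _ _) (hi2 s _ _)]
        rw [this]
        exact (hP.comp (by fun_prop : Continuous fun e : ℝ => s + L - e)).sub
          (hP.comp (by fun_prop : Continuous fun e : ℝ => s + e))
      have hcc : Continuous (fun e : ℝ => Complex.exp (Complex.I *
        ((-∫ t in (s + e)..(s + L - e), ktil s t : ℝ) : ℂ))) :=
        Complex.continuous_exp.comp (continuous_const.mul
          (Complex.continuous_ofReal.comp hcontE.neg))
      have h0 := (hcc.tendsto 0).mono_left (nhdsWithin_le_nhds (s := Set.Ioi 0))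
      simp only [add_zero, sub_zero] at h0
      rw [hFs s]
      exact h0
    have hratio : Tendsto (fun e : ℝ => (Q (s + L - e) - Q s) / (Q (s + e) - Q s)) (𝓝[>] 0)
        (𝓝 (-1)) := by
      have hs1 : Tendsto (fun e : ℝ => e⁻¹ • (Q (s + e) - Q s)) (𝓝[>] 0) (𝓝 (Q' s)) :=
        (hQd s).tendsto_slope_zero_right
      have hs2 : Tendsto (fun e : ℝ => e⁻¹ • (Q (s - e) - Q s)) (𝓝[>] 0) (𝓝 (-Q' s)) := by
        have hdn : HasDerivAt (fun e : ℝ => Q (s - e)) (-Q' s) 0 := by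
          have := HasDerivAt.comp_const_sub (f := Q) (f' := Q' s) s 0 (by simpa using hQd s)
          simpa using this
        have := hdn.tendsto_slope_zero_right
        simpa using this
      have := hs2.div hs1 (hQ'ne s)
      rw [neg_div, div_self (hQ'ne s)] at this
      refine this.congr' ?_
      filter_upwards [self_mem_nhdsWithin] with e he
      have he0 : (e : ℂ) ≠ 0 := by exact_mod_cast (ne_of_gt he : e ≠ 0)
      have hper' : Q (s + L - e) = Q (s - e) := by
        rw [← hQper (s - e)]; congr 1; ring
      rw [hper']
      simp only [Pi.div_apply, Complex.real_smul, Complex.ofReal_inv]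
      rw [mul_div_mul_left _ _ (inv_ne_zero he0)]
    have hlim2 : Tendsto (fun e : ℝ => ((Q (s + L - e) - Q s) / (Q (s + e) - Q s)) /
          ((‖(Q (s + L - e) - Q s) / (Q (s + e) - Q s)‖ : ℝ) : ℂ)) (𝓝[>] 0) (𝓝 (-1)) := by
      have hn : Tendsto (fun e : ℝ => ((‖(Q (s + L - e) - Q s) / (Q (s + e) - Q s)‖ : ℝ) : ℂ))
          (𝓝[>] 0) (𝓝 ((‖(-1 : ℂ)‖ : ℝ) : ℂ)) :=
        (Complex.continuous_ofReal.tendsto _).comp hratio.norm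
      have := hratio.div hn (by simp)
      rw [norm_neg, norm_one, Complex.ofReal_one, div_one] at this
      exact this
    exact tendsto_nhds_unique hlim1 (hlim2.congr' (hev.mono fun e he => he.symm))
  have hFconst : ∀ s, F s = F 0 := by
    intro s
    have := dl_const hFc.neg isPreconnected_univ (-1) (fun x _ => hFexp x)
      (Set.mem_univ s) (Set.mem_univ 0)
    simpa using this
  set J : ℝ → ℝ := fun h => ∫ u in (0:ℝ)..L, (ktil u (u + h) + ktil (u + h) u) with hJ
  have hintc : Continuous (fun p : ℝ × ℝ => ktil p.2 (p.2 + p.1) + ktil (p.2 + p.1) p.2) := by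
    have a1 : Continuous (fun p : ℝ × ℝ => ktil p.2 (p.2 + p.1)) :=
      hcont.comp (by fun_prop : Continuous fun p : ℝ × ℝ => (p.2, p.2 + p.1))
    have a2 : Continuous (fun p : ℝ × ℝ => ktil (p.2 + p.1) p.2) :=
      hcont.comp (by fun_prop : Continuous fun p : ℝ × ℝ => (p.2 + p.1, p.2))
    exact a1.add a2
  have hJc : Continuous J :=
    intervalIntegral.continuous_parametric_intervalIntegral_of_continuous'
      (f := fun h u => ktil u (u + h) + ktil (u + h) u) hintc 0 L
  have hJexp0 : ∀ h ∈ Set.Ioo 0 L, Complex.exp (Complex.I * ((-J h : ℝ) : ℂ)) = 1 := by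
    intro h hh
    have hqe : ∀ u, q u ≠ q (u + h) := fun u =>
      hne u (u + h) (by linarith [hh.1]) (by linarith [hh.2])
    have := dl_exp_angle (z := fun u => Q (u + h) - Q u) (z' := fun u => Q' (u + h) - Q' u)
      (fun t => ((hQd (t + h)).comp_add_const t h).sub (hQd t))
      ((hQ'c.comp (continuous_add_const h)).sub hQ'c) hL.le
      (fun t _ => hQne _ _ (hqe t)) (fun u => ktil u (u + h) + ktil (u + h) u)
      (fun t _ => by
        rw [hker _ _ (hqe t), hker _ _ (hqe t).symm, sub_div, Complex.sub_im,
          ← neg_sub (Q (t + h)) (Q t), div_neg, Complex.neg_im]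
        ring)
    have hz : Q (0 + h) - Q 0 ≠ 0 := hQne _ _ (hqe 0)
    have hzL : Q (L + h) - Q L = Q (0 + h) - Q 0 := by
      rw [← hQper (0 + h), ← hQper 0]; ring_nf
    simp only [hzL, div_self hz] at this
    rw [this]; simp
  have hJexp : ∀ h ∈ Set.Icc 0 L, Complex.exp (Complex.I * ((-J h : ℝ) : ℂ)) = 1 := by
    have hcl : IsClosed {h : ℝ | Complex.exp (Complex.I * ((-J h : ℝ) : ℂ)) = 1} :=
      isClosed_eq (Complex.continuous_exp.comp (continuous_const.mul
          (Complex.continuous_ofReal.comp hJc.neg))) continuous_const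
    have := hcl.closure_subset_iff.2 hJexp0
    rw [closure_Ioo hL.ne] at this
    exact this
  have hJ0 : J 0 = -(2 * π) := by
    rw [← horient, ← intervalIntegral.integral_neg, hJ]
    apply intervalIntegral.integral_congr
    intro t _
    simp only [add_zero, hdiag, dlDiag]
    ring
  have hJconst : ∀ h ∈ Set.Icc 0 L, J h = -(2 * π) := by
    intro h hh
    have := dl_const hJc.neg isPreconnected_Icc 1 hJexp hh (Set.left_mem_Icc.2 hL.le)
    have h2 : J h = J 0 := by simpa using this
    rw [h2, hJ0]
  have hA : ∫ h in (0:ℝ)..L, J h = L * (-(2 * π)) := by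
    rw [intervalIntegral.integral_congr (g := fun _ => -(2 * π))]
    · simp only [intervalIntegral.integral_const, smul_eq_mul, sub_zero]
    · intro h hh
      rw [Set.uIcc_of_le hL.le] at hh
      exact hJconst h hh
  have hB : ∫ h in (0:ℝ)..L, J h = L * (2 * F 0) := by
    have hsw := dl_swap (f := fun h u => ktil u (u + h) + ktil (u + h) u) hintc 0 L 0 L
    have hinner : ∀ u, ∫ h in (0:ℝ)..L, (ktil u (u + h) + ktil (u + h) u) =
        F u + ∫ v in (0:ℝ)..L, ktil v u := by
      intro u
      rw [intervalIntegral.integral_add]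
      · congr 1
        · rw [hFs u, intervalIntegral.integral_comp_add_left (fun t => ktil u t) u, add_zero]
        · have hp : Function.Periodic (fun v => ktil v u) L := fun v => hp1 v u
          have := hp.intervalIntegral_add_eq 0 u
          rw [zero_add] at this
          rw [this, intervalIntegral.integral_comp_add_left (fun t => ktil t u) u, add_zero]
      · exact ((hc2 u).comp (continuous_const_add u)).intervalIntegrable _ _
      · exact ((hc1 u).comp (continuous_const_add u)).intervalIntegrable _ _
    have hGc : Continuous (fun u => ∫ v in (0:ℝ)..L, ktil v u) :=
      intervalIntegral.continuous_parametric_intervalIntegral_of_continuous'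
        (f := fun u v => ktil v u) (hcont.comp continuous_swap) 0 L
    have hG : ∫ u in (0:ℝ)..L, ∫ v in (0:ℝ)..L, ktil v u = ∫ v in (0:ℝ)..L, F v :=
      (dl_swap hcont 0 L 0 L).symm
    have hFi : ∫ v in (0:ℝ)..L, F v = L * F 0 := by
      rw [intervalIntegral.integral_congr (g := fun _ => F 0) (fun v _ => hFconst v)]
      simp
    calc ∫ h in (0:ℝ)..L, J h
        = ∫ u in (0:ℝ)..L, (F u + ∫ v in (0:ℝ)..L, ktil v u) := by
          rw [hJ, hsw]
          exact intervalIntegral.integral_congr (fun u _ => hinner u)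
      _ = L * (2 * F 0) := by
          rw [intervalIntegral.integral_add (hFc.intervalIntegrable _ _)
            (hGc.intervalIntegrable _ _), hG, hFi]
          ring
  have hF0 : F 0 = -π := by
    have := mul_left_cancel₀ hL.ne' (hA.symm.trans hB)
    linarith
  intro s
  change 1 / π * F s = -1
  rw [hFconst s, hF0]
  have := pi_ne_zero
  field_simp
end

section
/- The squared Hilbert–Schmidt norm of the double layer potential is at least 1: (1/π²) ∫₀^L ∫₀^L k(s,t)² dt ds ≥ 1. -/
open Real Filter Topology MeasureTheory intervalIntegral

open Complex in
/-- Total turning of a chord based at a point of a regular closed curve is an odd multiple of π. -/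
lemma key_turning (a b : ℝ) (hab : a < b) (z z' : ℝ → ℂ) (k : ℝ → ℝ)
    (hz : ∀ t, HasDerivAt z (z' t) t) (h0 : ∀ t ∈ Set.Ioo a b, z t ≠ 0)
    (za : z a = 0) (zb : z b = 0) (hk : Continuous k)
    (hkz : ∀ t ∈ Set.Ioo a b, k t * ‖z t‖ ^ 2 = - ((starRingEnd ℂ) (z t) * z' t).im)
    (hz'ab : z' b = z' a) (hz'a : ‖z' a‖ = 1) :
    π ≤ |∫ t in a..b, k t| := by
  set K : ℝ → ℝ := fun t => ∫ u in a..t, k u with hK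
  have hKd : ∀ t, HasDerivAt K (k t) t := fun t =>
    intervalIntegral.integral_hasDerivAt_right (hk.intervalIntegrable _ _)
      hk.aestronglyMeasurable.stronglyMeasurableAtFilter hk.continuousAt
  set F : ℝ → ℂ := fun t => z t * Complex.exp (K t * I) * ((‖z t‖⁻¹ : ℝ) : ℂ) with hF
  have hFd : ∀ t ∈ Set.Ioo a b, HasDerivAt F 0 t := by
    intro t ht
    have hzt := h0 t ht
    have hnz : ‖z t‖ ≠ 0 := by simpa using hzt
    have h1 : HasDerivAt (fun t => ‖z t‖ ^ 2) (2 * inner ℝ (z t) (z' t)) t := (hz t).norm_sq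
    have h2 := h1.sqrt (by positivity)
    have h3 : HasDerivAt (fun t => ‖z t‖⁻¹) (-(inner ℝ (z t) (z' t)) / ‖z t‖ ^ 3) t := by
      have h4 := h2.inv (by simpa using hzt)
      simp only [Real.sqrt_sq (norm_nonneg _)] at h4
      have e : -(inner ℝ (z t) (z' t)) / ‖z t‖ ^ 3
          = -(2 * inner ℝ (z t) (z' t) / (2 * ‖z t‖)) / ‖z t‖ ^ 2 := by
        field_simp
      rw [e]
      exact h4
    have h5 : HasDerivAt (fun t => Complex.exp (K t * I)) (Complex.exp (K t * I) * (k t * I)) t :=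
      ((hKd t).ofReal_comp.mul_const I).cexp
    have h6 := ((hz t).mul h5).mul h3.ofReal_comp
    refine HasDerivAt.congr_deriv h6 ?_
    simp only [Pi.mul_apply]
    have hin : inner ℝ (z t) (z' t) = ((starRingEnd ℂ) (z t) * z' t).re := by
      rw [Complex.inner, mul_comm]
    have hkt : k t = - ((starRingEnd ℂ) (z t) * z' t).im / ‖z t‖ ^ 2 := by
      rw [← hkz t ht]; field_simp
    have hnC : (‖z t‖ : ℂ) ≠ 0 := by exact_mod_cast hnz
    have hsq : (‖z t‖ : ℂ) ^ 2 = (starRingEnd ℂ) (z t) * z t := by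
      rw [mul_comm, Complex.mul_conj']
    have hri := Complex.re_add_im ((starRingEnd ℂ) (z t) * z' t)
    rw [hin, hkt]
    generalize ((starRingEnd ℂ) (z t) * z' t).re = R at *
    generalize ((starRingEnd ℂ) (z t) * z' t).im = J at *
    push_cast
    field_simp
    have : (‖z t‖ : ℂ) ^ 2 * z' t = z t * (R + J * I) := by
      rw [hri, hsq]; ring
    linear_combination (Complex.exp (K t * I)) * this
  have hconst : ∃ c, ∀ t ∈ Set.Ioo a b, F t = c := by
    have := isOpen_Ioo.exists_is_const_of_deriv_eq_zero (s := Set.Ioo a b) (f := F)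
      isPreconnected_Ioo
      (fun t ht => (hFd t ht).differentiableAt.differentiableWithinAt)
      (fun t ht => (hFd t ht).deriv)
    exact this
  obtain ⟨c, hc⟩ := hconst
  have hKc : Continuous K := continuous_iff_continuousAt.2 fun t => (hKd t).continuousAt
  have hz'b : ‖z' b‖ = 1 := by rw [hz'ab, hz'a]
  have slope_lim : ∀ p : ℝ, z p = 0 → ‖z' p‖ = 1 → Tendsto
      (fun t => ((t - p)⁻¹ • z t) * Complex.exp (K t * I) * ((‖(t - p)⁻¹ • z t‖⁻¹ : ℝ) : ℂ))
      (𝓝[≠] p) (𝓝 (z' p * Complex.exp (K p * I))) := by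
    intro p hp hp1
    have hs : Tendsto (fun t => (t - p)⁻¹ • z t) (𝓝[≠] p) (𝓝 (z' p)) := by
      have := (hasDerivAt_iff_tendsto_slope.1 (hz p))
      refine this.congr fun t => ?_
      simp [slope, hp]
    have he : Tendsto (fun t => Complex.exp (K t * I)) (𝓝[≠] p) (𝓝 (Complex.exp (K p * I))) := by
      have : Continuous (fun t => Complex.exp (K t * I)) := by fun_prop
      exact (this.tendsto p).mono_left nhdsWithin_le_nhds
    have hn : Tendsto (fun t => ((‖(t - p)⁻¹ • z t‖⁻¹ : ℝ) : ℂ)) (𝓝[≠] p) (𝓝 1) := by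
      have h1 := (hs.norm.inv₀ (by rw [hp1]; norm_num))
      rw [hp1] at h1
      have := (Complex.continuous_ofReal.tendsto _).comp h1
      rw [inv_one, Complex.ofReal_one] at this
      exact this
    rw [← mul_one (z' p * _)]
    exact (hs.mul he).mul hn
  have hA : c = z' a * Complex.exp (K a * I) := by
    have h1 := (slope_lim a za hz'a).mono_left
      (nhdsWithin_mono a (s := Set.Ioi a) (fun x hx => ne_of_gt hx))
    refine tendsto_nhds_unique ?_ h1
    refine tendsto_const_nhds.congr' ?_
    filter_upwards [Ioo_mem_nhdsGT hab] with t ht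
    rw [← hc t ht]
    have hp : 0 < t - a := sub_pos.2 ht.1
    have hpC : ((t - a : ℝ) : ℂ) ≠ 0 := by exact_mod_cast hp.ne'
    have hnC : (‖z t‖ : ℂ) ≠ 0 := by simpa using h0 t ht
    simp only [hF]
    rw [norm_smul, norm_inv, Real.norm_eq_abs, abs_of_pos hp, Complex.real_smul]
    push_cast at hpC ⊢
    field_simp
  have hB : -c = z' b * Complex.exp (K b * I) := by
    have h1 := (slope_lim b zb hz'b).mono_left
      (nhdsWithin_mono b (s := Set.Iio b) (fun x hx => ne_of_lt hx))
    refine tendsto_nhds_unique ?_ h1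
    refine tendsto_const_nhds.congr' ?_
    filter_upwards [Ioo_mem_nhdsLT hab] with t ht
    rw [← hc t ht]
    have hp : t - b < 0 := sub_neg.2 ht.2
    have hpC : ((t - b : ℝ) : ℂ) ≠ 0 := by exact_mod_cast hp.ne
    have hnC : (‖z t‖ : ℂ) ≠ 0 := by simpa using h0 t ht
    simp only [hF]
    rw [norm_smul, norm_inv, Real.norm_eq_abs, abs_of_neg hp, Complex.real_smul]
    push_cast at hpC ⊢
    have : -((t:ℂ) - b) ≠ 0 := neg_ne_zero.2 hpC
    field_simp
  have hKa : K a = 0 := by simp [hK]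
  have hexp : Complex.exp (K b * I) = -1 := by
    have hne : z' a ≠ 0 := by intro h; simp [h] at hz'a
    rw [hKa] at hA
    rw [hA, hz'ab] at hB
    apply mul_left_cancel₀ hne
    rw [← hB]; simp
  have hcos : Real.cos (K b) = -1 := by
    have := congrArg Complex.re hexp
    rwa [Complex.exp_ofReal_mul_I_re] at this
  change π ≤ |K b|
  by_contra hlt
  push Not at hlt
  have h1 : Real.cos π < Real.cos |K b| :=
    Real.cos_lt_cos_of_nonneg_of_le_pi (abs_nonneg _) le_rfl hlt
  rw [Real.cos_abs, hcos, Real.cos_pi] at h1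
  exact lt_irrefl _ h1

lemma cs_interval (L : ℝ) (hL : 0 < L) (f : ℝ → ℝ) (hf : Continuous f)
    (h : π ≤ |∫ t in (0:ℝ)..L, f t|) : π ^ 2 / L ≤ ∫ t in (0:ℝ)..L, f t ^ 2 := by
  set S := ∫ t in (0:ℝ)..L, f t with hS
  have h1 : 0 ≤ ∫ t in (0:ℝ)..L, (f t - S / L) ^ 2 :=
    intervalIntegral.integral_nonneg hL.le fun t _ => sq_nonneg _
  have h2 : ∫ t in (0:ℝ)..L, (f t - S / L) ^ 2
      = (∫ t in (0:ℝ)..L, f t ^ 2) - S ^ 2 / L := by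
    have : (fun t => (f t - S / L) ^ 2) = fun t => f t ^ 2 - (2 * (S / L)) * f t + (S / L) ^ 2 := by
      ext t; ring
    rw [this, intervalIntegral.integral_add, intervalIntegral.integral_sub,
      intervalIntegral.integral_const_mul, ← hS, intervalIntegral.integral_const]
    · simp only [smul_eq_mul]; field_simp; ring
    all_goals exact Continuous.intervalIntegrable (by fun_prop) _ _
  have h3 : π ^ 2 ≤ S ^ 2 := by
    rw [← sq_abs S]; gcongr
  have : π ^ 2 / L ≤ S ^ 2 / L := by gcongr
  linarith

/-- The squared Hilbert–Schmidt norm of the double layer potential is at least 1: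
`(1/π²) ∫₀^L ∫₀^L k̃(s,t)² dt ds ≥ 1`. -/
theorem double_layer_trace_ge_one
    (L : ℝ) (hL : 0 < L)
    (q : ℝ → EuclideanSpace ℝ (Fin 2))
    (hq : ContDiff ℝ 2 q)
    (hper : ∀ s, q (s + L) = q s)
    (hunit : ∀ s, ‖deriv q s‖ = 1)
    (hinj : Set.InjOn q (Set.Ico 0 L))
    (horient : (∫ t in (0:ℝ)..L,
      (deriv (deriv q) t 1 * deriv q t 0 - deriv (deriv q) t 0 * deriv q t 1)) = 2 * π)
    (ktil : ℝ → ℝ → ℝ)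
    (hcont : Continuous (fun p : ℝ × ℝ => ktil p.1 p.2))
    (hoff : ∀ s t, q s ≠ q t → ktil s t = dlKernel q s t)
    (hdiag : ∀ t, ktil t t = dlDiag q t) :
    1 ≤ (1 / π ^ 2) * ∫ s in (0:ℝ)..L, ∫ t in (0:ℝ)..L, (ktil s t) ^ 2 := by
  have hq1 : Differentiable ℝ q := hq.differentiable (by norm_num)
  have hco : ∀ i t, HasDerivAt (fun t => q t i) (deriv q t i) t := fun i t =>
    (EuclideanSpace.proj (𝕜 := ℝ) i).hasFDerivAt.comp_hasDerivAt t (hq1 t).hasDerivAt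
  have hdper : ∀ s, deriv q (s + L) = deriv q s := fun s => by
    rw [← deriv_comp_add_const, funext hper]
  have hmain : ∀ s ∈ Set.Ioo 0 L, π ^ 2 / L ≤ ∫ t in (0:ℝ)..L, ktil s t ^ 2 := by
    intro s hs
    have hkc : Continuous (ktil s) := hcont.comp (by fun_prop : Continuous fun t => (s, t))
    apply cs_interval L hL _ hkc
    have hne1 : ∀ t ∈ Set.Ico 0 L, t ≠ s → q s ≠ q t := fun t ht hts h =>
      hts (hinj ht ⟨hs.1.le, hs.2⟩ h.symm)
    have hne : ∀ t ∈ Set.Ioo s (s + L), q s ≠ q t := by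
      intro t ht
      rcases lt_or_ge t L with h | h
      · exact hne1 t ⟨hs.1.le.trans ht.1.le, h⟩ ht.1.ne'
      · have := hne1 (t - L) ⟨by linarith, by linarith [ht.2, hs.2]⟩ (by linarith [ht.2])
        rwa [← hper (t - L), sub_add_cancel] at this
    have hint : ∫ t in (0:ℝ)..L, ktil s t = ∫ t in s..(s + L), ktil s t := by
      have e1 : ∫ t in (0:ℝ)..s, ktil s t = ∫ t in L..(s + L), ktil s t := by
        have : ∫ t in (0:ℝ)..s, ktil s (t + L) = ∫ t in L..(s + L), ktil s t := by
          rw [intervalIntegral.integral_comp_add_right (fun t => ktil s t), zero_add]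
        rw [← this]
        apply intervalIntegral.integral_congr_Ioo_of_le hs.1.le
        intro t ht
        have h1 := hne1 t ⟨ht.1.le, ht.2.trans hs.2⟩ ht.2.ne
        show ktil s t = ktil s (t + L)
        rw [hoff _ _ h1, hoff _ _ (by rwa [hper])]
        simp only [dlKernel, hper, hdper]
      have i1 := fun a b => hkc.intervalIntegrable (μ := volume) a b
      rw [← intervalIntegral.integral_add_adjacent_intervals (i1 0 s) (i1 s L), e1, add_comm,
        intervalIntegral.integral_add_adjacent_intervals (i1 _ _) (i1 _ _)]
    rw [hint]
    have nrm : ∀ v : EuclideanSpace ℝ (Fin 2), ‖v‖ ^ 2 = v 0 ^ 2 + v 1 ^ 2 := fun v => by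
      rw [EuclideanSpace.real_norm_sq_eq, Fin.sum_univ_two]
    have nrmC : ∀ x y : ℝ, ‖(⟨x, y⟩ : ℂ)‖ ^ 2 = x ^ 2 + y ^ 2 := fun x y => by
      rw [Complex.sq_norm, Complex.normSq_mk]; ring
    apply key_turning s (s + L) (by linarith) (fun t => ⟨q t 0 - q s 0, q t 1 - q s 1⟩)
      (fun t => ⟨deriv q t 0, deriv q t 1⟩) (ktil s)
    · intro t
      have h0 := ((hco 0 t).sub_const (q s 0)).ofReal_comp
      have h1 := (((hco 1 t).sub_const (q s 1)).ofReal_comp).mul_const Complex.I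
      have := h0.add h1
      simp only [Complex.mk_eq_add_mul_I]
      exact this
    · intro t ht h
      apply hne t ht
      have h0 := congrArg Complex.re h
      have h1 := congrArg Complex.im h
      simp only [Complex.zero_re, Complex.zero_im] at h0 h1
      ext i
      fin_cases i
      · show q s 0 = q t 0
        linarith
      · show q s 1 = q t 1
        linarith
    · apply Complex.ext <;> simp
    · simp only [hper]; apply Complex.ext <;> simp
    · exact hkc
    · intro t ht
      have hn := hne t ht
      have hpos : ‖q s - q t‖ ^ 2 ≠ 0 := by
        have : q s - q t ≠ 0 := sub_ne_zero.2 hn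
        simpa using this
      have e : ‖(⟨q t 0 - q s 0, q t 1 - q s 1⟩ : ℂ)‖ ^ 2 = ‖q s - q t‖ ^ 2 := by
        rw [nrmC, nrm]
        simp only [PiLp.sub_apply]
        ring
      rw [hoff s t hn, dlKernel, e, div_mul_cancel₀ _ hpos]
      simp only [Complex.mul_im, Complex.conj_re, Complex.conj_im]
      ring
    · simp only [hdper]
    · have h1 : ‖(⟨deriv q s 0, deriv q s 1⟩ : ℂ)‖ ^ 2 = 1 := by
        rw [nrmC, ← nrm, hunit]; norm_num
      have h2 := norm_nonneg (⟨deriv q s 0, deriv q s 1⟩ : ℂ)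
      exact by nlinarith
  have hIc : Continuous fun s => ∫ t in (0:ℝ)..L, ktil s t ^ 2 :=
    intervalIntegral.continuous_parametric_intervalIntegral_of_continuous'
      (hcont.pow 2) 0 L
  have hfin : ∫ _s in (0:ℝ)..L, π ^ 2 / L ≤ ∫ s in (0:ℝ)..L, ∫ t in (0:ℝ)..L, ktil s t ^ 2 :=
    intervalIntegral.integral_mono_on_of_le_Ioo hL.le (by simp)
      (hIc.intervalIntegrable _ _) hmain
  have hc : ∫ _s in (0:ℝ)..L, π ^ 2 / L = π ^ 2 := by
    rw [intervalIntegral.integral_const]; simp only [smul_eq_mul]; field_simp; ring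
  rw [hc] at hfin
  have hpi : 0 < π ^ 2 := by positivity
  rw [one_div, ← div_eq_inv_mul, le_div_iff₀ hpi]
  linarith
end

section
/- The trace of K*K decomposes as follows: (1/π²) ∫₀^L ∫₀^L k(s,t)² dt ds = 1 + (1/π²) ∫₀^L ∫₀^L (k(s,t) + π/L)² dt ds. -/
open Real Filter Topology MeasureTheory intervalIntegral

/-- Integrality of the winding number of a closed nonvanishing `C¹` curve. -/
theorem winding_integral_int (L : ℝ) (z z' : ℝ → ℂ) (hz : ∀ s, HasDerivAt z (z' s) s)
    (hz' : Continuous z') (h0 : ∀ s, z s ≠ 0) (hper : z L = z 0) :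
    ∃ n : ℤ, (∫ s in (0:ℝ)..L, (z' s / z s).im) = n * (2 * π) := by
  have hzc : Continuous z := continuous_iff_continuousAt.2 fun s => (hz s).continuousAt
  have hc : Continuous fun s => z' s / z s := hz'.div hzc h0
  have hI : ∀ s, HasDerivAt (fun u => ∫ v in (0:ℝ)..u, z' v / z v) (z' s / z s) s := fun s =>
    intervalIntegral.integral_hasDerivAt_right (hc.intervalIntegrable _ _)
      (hc.stronglyMeasurableAtFilter _ _) hc.continuousAt
  have hE : ∀ s, HasDerivAt
      (fun u => Complex.exp (-∫ v in (0:ℝ)..u, z' v / z v) * z u) 0 s := by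
    intro s
    have := ((hI s).neg.cexp).mul (hz s)
    refine HasDerivAt.congr_deriv this ?_
    have := h0 s
    have hd : z' s / z s * z s = z' s := div_mul_cancel₀ _ this
    change Complex.exp (-∫ v in (0:ℝ)..s, z' v / z v) * (-(z' s / z s)) * z s
      + Complex.exp (-∫ v in (0:ℝ)..s, z' v / z v) * z' s = 0
    rw [mul_assoc, neg_mul, hd]
    ring
  have hconst := is_const_of_deriv_eq_zero (fun s => (hE s).differentiableAt)
    (fun s => (hE s).deriv) L 0
  simp only [intervalIntegral.integral_same, neg_zero, Complex.exp_zero, one_mul, hper] at hconst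
  have h1 : Complex.exp (-∫ v in (0:ℝ)..L, z' v / z v) = 1 := by
    have := h0 0
    exact mul_right_cancel₀ this (hconst.trans (one_mul _).symm)
  obtain ⟨n, hn⟩ := Complex.exp_eq_one_iff.1 h1
  refine ⟨-n, ?_⟩
  have h2 := Complex.imCLM.intervalIntegral_comp_comm (hc.intervalIntegrable (μ := volume) 0 L)
  simp only [Complex.imCLM_apply] at h2
  rw [h2, ← neg_neg (∫ v in (0:ℝ)..L, z' v / z v), hn]
  simp

theorem eq_of_q_eq (L : ℝ) (hL : 0 < L) (q : ℝ → EuclideanSpace ℝ (Fin 2))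
    (hper : ∀ s, q (s + L) = q s) (hinj : Set.InjOn q (Set.Ico 0 L)) (s t : ℝ)
    (h : q s = q t) : ∃ n : ℤ, t = s + n * L := by
  have hp : Function.Periodic q L := hper
  have key : ∀ x, q (toIcoMod hL 0 x) = q x := by
    intro x
    rw [toIcoMod]
    exact hp.sub_zsmul_eq _
  have m : ∀ x, toIcoMod hL 0 x ∈ Set.Ico 0 L := fun x => by
    simpa using toIcoMod_mem_Ico hL 0 x
  have e := hinj (m s) (m t) (by rw [key, key, h])
  refine ⟨toIcoDiv hL 0 t - toIcoDiv hL 0 s, ?_⟩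
  simp only [toIcoMod, zsmul_eq_mul] at e
  push_cast
  linarith

theorem int_const_on (L : ℝ) (hL : 0 < L) (G : ℝ → ℝ) (hG : Continuous G)
    (hint : ∀ h ∈ Set.Ico 0 L, ∃ n : ℤ, G h = n * (2 * π)) :
    ∀ h ∈ Set.Icc 0 L, G h = G 0 := by
  have h1 : ∀ h ∈ Set.Ico 0 L, G h = G 0 := by
    intro h hh
    have := (isPreconnected_Ico (a := (0:ℝ)) (b := L)).constant_of_mapsTo
      (f := fun h => G h / (2 * π)) (T := Set.range ((↑) : ℤ → ℝ))
      (IsDiscrete.mk (DiscreteTopology.of_subset (s := Set.range ((↑) : ℤ → ℝ)) (by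
        exact Int.isClosedEmbedding_coe_real.toIsEmbedding.toHomeomorph.symm.isEmbedding.discreteTopology) subset_rfl))
      (hG.div_const _).continuousOn
      (fun x hx => by
        obtain ⟨n, hn⟩ := hint x hx
        refine ⟨n, ?_⟩
        simp only [hn]
        field_simp) hh ⟨le_rfl, hL⟩
    field_simp at this
    exact this
  have h2 : Set.EqOn G (fun _ => G 0) (closure (Set.Ico 0 L)) :=
    Set.EqOn.closure h1 hG continuous_const
  rw [closure_Ico hL.ne] at h2
  exact h2

theorem dlKernel_per (L : ℝ) (q : ℝ → EuclideanSpace ℝ (Fin 2))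
    (hper : ∀ s, q (s + L) = q s) (s t : ℝ) :
    dlKernel q s (t + L) = dlKernel q s t ∧ dlKernel q (s + L) t = dlKernel q s t := by
  have hd : deriv q (t + L) = deriv q t := by
    rw [← deriv_comp_add_const]
    simp only [hper]
  constructor
  · simp only [dlKernel, hper, hd]
  · simp only [dlKernel, hper]

theorem interval_swap (L : ℝ) (hL : 0 < L) (f : ℝ → ℝ → ℝ)
    (hcont : Continuous (fun p : ℝ × ℝ => f p.1 p.2)) :
    ∫ x in (0:ℝ)..L, ∫ y in (0:ℝ)..L, f x y = ∫ y in (0:ℝ)..L, ∫ x in (0:ℝ)..L, f x y := by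
  simp only [intervalIntegral.integral_of_le hL.le]
  apply integral_integral_swap
  rw [Measure.prod_restrict]
  have h1 : IntegrableOn (Function.uncurry f) (Set.Icc 0 L ×ˢ Set.Icc 0 L)
      ((volume : Measure ℝ).prod volume) :=
    (hcont : Continuous (Function.uncurry f)).continuousOn.integrableOn_compact
      (isCompact_Icc.prod isCompact_Icc)
  exact h1.mono_set (Set.prod_mono Set.Ioc_subset_Icc_self Set.Ioc_subset_Icc_self)

theorem double_int (L : ℝ) (hL : 0 < L) (f : ℝ → ℝ → ℝ)
    (hcont : Continuous (fun p : ℝ × ℝ => f p.1 p.2))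
    (hp : ∀ s, Function.Periodic (f s) L) :
    ∫ h in (0:ℝ)..L, ∫ s in (0:ℝ)..L, f s (s + h) = ∫ s in (0:ℝ)..L, ∫ t in (0:ℝ)..L, f s t := by
  rw [interval_swap L hL (fun h s => f s (s + h))
    (hcont.comp (continuous_snd.prodMk (continuous_snd.add continuous_fst)))]
  apply intervalIntegral.integral_congr
  intro s _
  simp only
  rw [intervalIntegral.integral_comp_add_left (f s) s, add_zero,
    (hp s).intervalIntegral_add_eq s 0, zero_add]

theorem dl_double_integral
    (L : ℝ) (hL : 0 < L)
    (q : ℝ → EuclideanSpace ℝ (Fin 2))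
    (hq : ContDiff ℝ 2 q)
    (hper : ∀ s, q (s + L) = q s)
    (hinj : Set.InjOn q (Set.Ico 0 L))
    (horient : (∫ t in (0:ℝ)..L,
      (deriv (deriv q) t 1 * deriv q t 0 - deriv (deriv q) t 0 * deriv q t 1)) = 2 * π)
    (ktil : ℝ → ℝ → ℝ)
    (hcont : Continuous (fun p : ℝ × ℝ => ktil p.1 p.2))
    (hoff : ∀ s t, q s ≠ q t → ktil s t = dlKernel q s t)
    (hdiag : ∀ t, ktil t t = dlDiag q t) :
    ∫ s in (0:ℝ)..L, ∫ t in (0:ℝ)..L, ktil s t = - (π * L) := by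
  have hdense : ∀ s, Dense {t | q s ≠ q t} := by
    intro s
    have hcount : (Set.range fun n : ℤ => s + n * L).Countable := Set.countable_range _
    refine (hcount.dense_compl ℝ).mono ?_
    intro t ht h
    obtain ⟨n, hn⟩ := eq_of_q_eq L hL q hper hinj s t h
    exact ht ⟨n, hn.symm⟩
  have hc1 : ∀ s, Continuous (ktil s) := fun s =>
    hcont.comp (continuous_const.prodMk continuous_id)
  have hc2 : ∀ t, Continuous (fun s => ktil s t) := fun t =>
    hcont.comp (continuous_id.prodMk continuous_const)
  have hp1 : ∀ s, Function.Periodic (ktil s) L := by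
    intro s
    have : (fun t => ktil s (t + L)) = ktil s := by
      refine Continuous.ext_on (hdense s) ((hc1 s).comp (continuous_add_const L)) (hc1 s) ?_
      intro t ht
      simp only
      rw [hoff s t ht, hoff s (t + L) (by rw [hper]; exact ht), (dlKernel_per L q hper s t).1]
    exact congrFun this
  have hp2 : ∀ t, Function.Periodic (fun s => ktil s t) L := by
    intro t
    have : (fun s => ktil (s + L) t) = fun s => ktil s t := by
      refine Continuous.ext_on (hdense t) ((hc2 t).comp (continuous_add_const L)) (hc2 t) ?_
      intro s hs
      simp only
      rw [hoff s t (Ne.symm hs), hoff (s + L) t (by rw [hper]; exact Ne.symm hs),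
        (dlKernel_per L q hper s t).2]
    exact congrFun this
  have hcA : Continuous (fun p : ℝ × ℝ => ktil p.2 (p.2 + p.1)) :=
    hcont.comp (continuous_snd.prodMk (continuous_snd.add continuous_fst))
  have hcB : Continuous (fun p : ℝ × ℝ => ktil (p.2 + p.1) p.2) :=
    hcont.comp ((continuous_snd.add continuous_fst).prodMk continuous_snd)
  have hGA : Continuous (fun h => ∫ s in (0:ℝ)..L, ktil s (s + h)) :=
    intervalIntegral.continuous_parametric_intervalIntegral_of_continuous' hcA _ _
  have hGB : Continuous (fun h => ∫ s in (0:ℝ)..L, ktil (s + h) s) :=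
    intervalIntegral.continuous_parametric_intervalIntegral_of_continuous' hcB _ _
  have iA : ∀ h, IntervalIntegrable (fun s => ktil s (s + h)) volume 0 L := fun h =>
    (hcA.comp (continuous_const.prodMk continuous_id)).intervalIntegrable _ _
  have iB : ∀ h, IntervalIntegrable (fun s => ktil (s + h) s) volume 0 L := fun h =>
    (hcB.comp (continuous_const.prodMk continuous_id)).intervalIntegrable _ _
  have hG0 : (∫ s in (0:ℝ)..L, ktil s (s + 0)) + (∫ s in (0:ℝ)..L, ktil (s + 0) s) = - (2 * π) := by
    rw [← horient, ← intervalIntegral.integral_add (iA 0) (iB 0), ← intervalIntegral.integral_neg]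
    apply intervalIntegral.integral_congr
    intro s _
    simp only [add_zero, hdiag, dlDiag]
    ring
  have hqd : ∀ s (i : Fin 2), HasDerivAt (fun u => q u i) (deriv q s i) s := by
    intro s i
    have h1 : HasDerivAt q (deriv q s) s :=
      (hq.differentiable (by norm_num) s).hasDerivAt
    exact (EuclideanSpace.proj (𝕜 := ℝ) i).hasFDerivAt.comp_hasDerivAt s h1
  have hq'c : Continuous (deriv q) := hq.continuous_deriv (by norm_num)
  have hq'ci : ∀ i : Fin 2, Continuous fun s => deriv q s i := fun i => by fun_prop
  have hconst := int_const_on L hL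
    (fun h => (∫ s in (0:ℝ)..L, ktil s (s + h)) + (∫ s in (0:ℝ)..L, ktil (s + h) s))
    (hGA.add hGB) (by
      intro h hh
      rcases hh.1.eq_or_lt with rfl | hpos
      · exact ⟨-1, by rw [hG0]; push_cast; ring⟩
      have hne : ∀ s, q s ≠ q (s + h) := by
        intro s he
        obtain ⟨n, hn⟩ := eq_of_q_eq L hL q hper hinj _ _ he
        have hn' : h = n * L := by linarith
        have h1 : (0:ℝ) < n := by
          by_contra hcon
          nlinarith
        have h2 : (n:ℝ) < 1 := by
          by_contra hcon
          nlinarith [hh.2]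
        have h3 : 0 < n := by exact_mod_cast h1
        have h4 : n < 1 := by exact_mod_cast h2
        omega
      obtain ⟨n, hn⟩ := winding_integral_int L
        (fun s => ((q (s + h) 0 - q s 0 : ℝ) : ℂ) + ((q (s + h) 1 - q s 1 : ℝ) : ℂ) * Complex.I)
        (fun s => ((deriv q (s + h) 0 - deriv q s 0 : ℝ) : ℂ)
          + ((deriv q (s + h) 1 - deriv q s 1 : ℝ) : ℂ) * Complex.I)
        (fun s => by
          have hd : ∀ i : Fin 2, HasDerivAt (fun u => q (u + h) i - q u i)
              (deriv q (s + h) i - deriv q s i) s := fun i =>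
            ((hqd (s + h) i).comp_add_const s h).sub (hqd s i)
          exact (hd 0).ofReal_comp.add ((hd 1).ofReal_comp.mul_const _))
        (by fun_prop)
        (fun s h0 => by
          apply hne s
          have hre := congrArg Complex.re h0
          have him := congrArg Complex.im h0
          simp at hre him
          ext i
          fin_cases i
          · simp; linarith
          · simp; linarith)
        (by
          have e1 : q (L + h) = q h := by rw [add_comm]; exact hper h
          have e2 : q L = q 0 := by simpa using hper 0
          simp only [e1, e2, zero_add])
      refine ⟨-n, ?_⟩
      rw [← intervalIntegral.integral_add (iA h) (iB h)]
      push_cast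
      rw [neg_mul, ← hn, ← intervalIntegral.integral_neg]
      apply intervalIntegral.integral_congr
      intro s _
      simp only
      rw [hoff _ _ (hne s), hoff _ _ (hne s).symm, Complex.div_im, Complex.normSq_apply]
      simp only [dlKernel, EuclideanSpace.real_norm_sq_eq, Fin.sum_univ_two, PiLp.sub_apply]
      simp
      rw [← sub_div]
      have e : (q s 0 - q (s + h) 0) ^ 2 + (q s 1 - q (s + h) 1) ^ 2
        = (q (s + h) 0 - q s 0) * (q (s + h) 0 - q s 0)
          + (q (s + h) 1 - q s 1) * (q (s + h) 1 - q s 1) := by ring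
      have e' : (q (s + h) 0 - q s 0) ^ 2 + (q (s + h) 1 - q s 1) ^ 2
        = (q (s + h) 0 - q s 0) * (q (s + h) 0 - q s 0)
          + (q (s + h) 1 - q s 1) * (q (s + h) 1 - q s 1) := by ring
      rw [e, e', ← add_div]
      congr 1
      ring)
  have hcS : Continuous (fun p : ℝ × ℝ => ktil p.2 p.1) :=
    hcont.comp (continuous_snd.prodMk continuous_fst)
  have T1 := double_int L hL ktil hcont hp1
  have T2 := double_int L hL (fun s t => ktil t s) hcS hp2
  have T3 : (∫ s in (0:ℝ)..L, ∫ t in (0:ℝ)..L, ktil t s)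
      = ∫ s in (0:ℝ)..L, ∫ t in (0:ℝ)..L, ktil s t := by
    exact interval_swap L hL (fun s t => ktil t s) hcS
  have T4 : ∫ h in (0:ℝ)..L,
      ((∫ s in (0:ℝ)..L, ktil s (s + h)) + (∫ s in (0:ℝ)..L, ktil (s + h) s))
      = ∫ h in (0:ℝ)..L, (- (2 * π)) := by
    apply intervalIntegral.integral_congr
    intro h hh
    rw [Set.uIcc_of_le hL.le] at hh
    have := hconst h hh
    simp only at this ⊢
    rw [this, hG0]
  rw [intervalIntegral.integral_add (hGA.intervalIntegrable _ _) (hGB.intervalIntegrable _ _)] at T4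
  rw [T1, T2, T3] at T4
  simp at T4
  linarith

theorem int_expand (L c d : ℝ) (f g : ℝ → ℝ) (hf : Continuous f) (hg : Continuous g) :
    ∫ x in (0:ℝ)..L, (f x + (c * g x + d))
      = (∫ x in (0:ℝ)..L, f x) + (c * (∫ x in (0:ℝ)..L, g x) + L * d) := by
  have h1 : Continuous fun x => c * g x := by fun_prop
  have h2 : Continuous fun x => c * g x + d := by fun_prop
  rw [intervalIntegral.integral_add (hf.intervalIntegrable _ _) (h2.intervalIntegrable _ _),
    intervalIntegral.integral_add (h1.intervalIntegrable _ _)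
      (continuous_const.intervalIntegrable _ _), intervalIntegral.integral_const_mul]
  simp

/-- The trace of `K*K` decomposes as
`(1/π²)∫₀^L∫₀^L k̃(s,t)² dt ds = 1 + (1/π²)∫₀^L∫₀^L (k̃(s,t) + π/L)² dt ds`. -/
theorem double_layer_trace_decomposition
    (L : ℝ) (hL : 0 < L)
    (q : ℝ → EuclideanSpace ℝ (Fin 2))
    (hq : ContDiff ℝ 2 q)
    (hper : ∀ s, q (s + L) = q s)
    (hunit : ∀ s, ‖deriv q s‖ = 1)
    (hinj : Set.InjOn q (Set.Ico 0 L))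
    (horient : (∫ t in (0:ℝ)..L,
      (deriv (deriv q) t 1 * deriv q t 0 - deriv (deriv q) t 0 * deriv q t 1)) = 2 * π)
    (ktil : ℝ → ℝ → ℝ)
    (hcont : Continuous (fun p : ℝ × ℝ => ktil p.1 p.2))
    (hoff : ∀ s t, q s ≠ q t → ktil s t = dlKernel q s t)
    (hdiag : ∀ t, ktil t t = dlDiag q t) :
    ((1 / π ^ 2) * ∫ s in (0:ℝ)..L, ∫ t in (0:ℝ)..L, (ktil s t) ^ 2)
      = 1 + (1 / π ^ 2) * ∫ s in (0:ℝ)..L, ∫ t in (0:ℝ)..L, (ktil s t + π / L) ^ 2 := by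
  have key := dl_double_integral L hL q hq hper hinj horient ktil hcont hoff hdiag
  have hc1 : ∀ s, Continuous (ktil s) := fun s =>
    hcont.comp (continuous_const.prodMk continuous_id)
  have hI1 : Continuous fun s => ∫ t in (0:ℝ)..L, ktil s t :=
    intervalIntegral.continuous_parametric_intervalIntegral_of_continuous' hcont _ _
  have hI2 : Continuous fun s => ∫ t in (0:ℝ)..L, (ktil s t) ^ 2 :=
    intervalIntegral.continuous_parametric_intervalIntegral_of_continuous' (hcont.pow 2) _ _
  have hin : ∀ s, ∫ t in (0:ℝ)..L, (ktil s t + π / L) ^ 2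
      = (∫ t in (0:ℝ)..L, (ktil s t) ^ 2) + (2 * (π / L) * (∫ t in (0:ℝ)..L, ktil s t)
        + L * (π / L) ^ 2) := by
    intro s
    have : (fun t => (ktil s t + π / L) ^ 2)
        = fun t => (ktil s t) ^ 2 + (2 * (π / L) * ktil s t + (π / L) ^ 2) := by
      funext t; ring
    rw [this]
    exact int_expand L _ _ (fun t => (ktil s t) ^ 2) (ktil s) ((hc1 s).pow 2) (hc1 s)
  simp only [hin]
  rw [int_expand L _ _ (fun s => ∫ t in (0:ℝ)..L, (ktil s t) ^ 2)
    (fun s => ∫ t in (0:ℝ)..L, ktil s t) hI2 hI1, key]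
  have := Real.pi_ne_zero
  field_simp
  ring
end

section
/- The trace of K*K equals 1 if and only if the boundary curve is a circle: (1/π²) ∫₀^L ∫₀^L k(s,t)² dt ds = 1 holds if and only if there exist a point c ∈ ℝ² and a radius R > 0 such that ‖q(s) − c‖ = R for all s ∈ ℝ. -/
open Real Filter Topology MeasureTheory intervalIntegral

lemma dl_swap_s4 (f : ℝ → ℝ → ℝ) (hf : Continuous (Function.uncurry f)) (L : ℝ) (hL : 0 < L) :
    ∫ s in (0:ℝ)..L, ∫ t in (0:ℝ)..L, f s t = ∫ t in (0:ℝ)..L, ∫ s in (0:ℝ)..L, f s t := by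
  have h := intervalIntegral_integral_swap (μ := volume.restrict (Set.Ioc 0 L)) (a := 0) (b := L)
    (f := f) (by
      rw [Measure.prod_restrict, ← Measure.volume_eq_prod]
      change IntegrableOn _ _ _
      rw [Set.uIoc_of_le hL.le]
      exact (hf.continuousOn.integrableOn_compact
        (isCompact_Icc.prod isCompact_Icc : IsCompact (Set.Icc (0:ℝ) L ×ˢ Set.Icc (0:ℝ) L))).mono_set
        (Set.prod_mono Set.Ioc_subset_Icc_self Set.Ioc_subset_Icc_self))
  simp only [intervalIntegral.integral_of_le hL.le] at h ⊢
  exact h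

lemma dl_winding (X Y U V : ℝ → ℝ) (hX : ∀ t, HasDerivAt X (U t) t)
    (hY : ∀ t, HasDerivAt Y (V t) t) (hU : Continuous U) (hV : Continuous V)
    (hne : ∀ t, X t ^ 2 + Y t ^ 2 ≠ 0) (L : ℝ) (hXL : X L = X 0) (hYL : Y L = Y 0) :
    ∃ n : ℤ, ∫ s in (0:ℝ)..L, (X s * V s - Y s * U s) / (X s ^ 2 + Y s ^ 2) = n * (2 * π) := by
  have hXc : Continuous X := continuous_iff_continuousAt.2 fun t => (hX t).continuousAt
  have hYc : Continuous Y := continuous_iff_continuousAt.2 fun t => (hY t).continuousAt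
  set Z : ℝ → ℂ := fun s => (X s : ℂ) + (Y s : ℂ) * Complex.I with hZ
  set W : ℝ → ℂ := fun s => (U s : ℂ) + (V s : ℂ) * Complex.I with hW
  have hZn : ∀ t, Complex.normSq (Z t) = X t ^ 2 + Y t ^ 2 := by
    intro t; simp [hZ, Complex.normSq_apply]; ring
  have hZ0 : ∀ t, Z t ≠ 0 := by
    intro t h
    apply hne t
    rw [← hZn, h]; simp
  have hZd : ∀ t, HasDerivAt Z (W t) t := fun t =>
    (hX t).ofReal_comp.add ((hY t).ofReal_comp.mul_const _)
  have hZc : Continuous Z := by fun_prop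
  have hWc : Continuous W := by fun_prop
  have hQc : Continuous (fun t => W t / Z t) := hWc.div hZc hZ0
  set E : ℝ → ℂ := fun s => ∫ t in (0:ℝ)..s, W t / Z t with hE
  have hEd : ∀ t, HasDerivAt E (W t / Z t) t := fun t =>
    integral_hasDerivAt_right (hQc.intervalIntegrable _ _)
      hQc.stronglyMeasurable.stronglyMeasurableAtFilter hQc.continuousAt
  have hG : ∀ t, HasDerivAt (fun s => Complex.exp (- E s) * Z s) 0 t := by
    intro t
    have := ((hEd t).neg.cexp).mul (hZd t)
    have h0 := hZ0 t
    have e : Complex.exp (-E t) * -(W t / Z t) * Z t + Complex.exp (-E t) * W t = 0 := by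
      field_simp
      ring
    exact e ▸ this
  have hconst := is_const_of_deriv_eq_zero (fun t => (hG t).differentiableAt)
    (fun t => (hG t).deriv) L 0
  have hZL : Z L = Z 0 := by simp [hZ, hXL, hYL]
  have hE0 : E 0 = 0 := by simp [hE]
  simp only [hZL, hE0, neg_zero, Complex.exp_zero] at hconst
  have h1 : Complex.exp (- E L) = 1 := mul_right_cancel₀ (hZ0 0) hconst
  obtain ⟨n, hn⟩ := Complex.exp_eq_one_iff.1 h1
  refine ⟨-n, ?_⟩
  have him : (E L).im = ∫ t in (0:ℝ)..L, (W t / Z t).im := by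
    have := Complex.imCLM.intervalIntegral_comp_comm (hQc.intervalIntegrable (μ := volume) 0 L)
    simpa using this.symm
  have h2 : (- E L).im = n * (2 * π) := by
    rw [hn]; simp
  have h3 : ∫ s in (0:ℝ)..L, (X s * V s - Y s * U s) / (X s ^ 2 + Y s ^ 2) = (E L).im := by
    rw [him]
    congr 1
    ext t
    rw [Complex.div_im, hZn]
    simp [hZ, hW]
    ring
  rw [h3]
  rw [Complex.neg_im] at h2
  push_cast
  linarith

lemma dl_ivt (f : ℝ → ℝ) (hf : Continuous f) (L : ℝ)
    (h0 : f 0 = 2 * π) (hn : ∀ h, 0 < h → h < L → ∃ n : ℤ, f h = n * (2 * π))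
    (h : ℝ) (h1 : 0 < h) (h2 : h < L) : f h = 2 * π := by
  have key : ∀ m : ℤ, (m : ℝ) * (2 * π) + π ∉ f '' Set.Ico 0 L := by
    rintro m ⟨x, hx, hxe⟩
    have : ∃ n : ℤ, f x = n * (2 * π) := by
      rcases hx.1.eq_or_lt with h | h
      · exact ⟨1, by rw [← h, h0]; simp⟩
      · exact hn x h hx.2
    obtain ⟨n, hn⟩ := this
    rw [hn] at hxe
    have h3 : ((2 * n : ℤ) : ℝ) = ((2 * m + 1 : ℤ) : ℝ) := by
      push_cast
      have := Real.pi_pos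
      apply mul_right_cancel₀ this.ne'
      linarith
    have := Int.cast_injective h3
    omega
  obtain ⟨n, hn'⟩ := hn h h1 h2
  have hpi := Real.pi_pos
  have m0 : (0:ℝ) ∈ Set.Ico 0 L := ⟨le_rfl, h1.trans h2⟩
  have mh : h ∈ Set.Ico 0 L := ⟨h1.le, h2⟩
  have hn1 : n = 1 := by
    by_contra hne
    rcases lt_or_gt_of_ne hne with hlt | hgt
    · have hle : (n : ℝ) ≤ 0 := by exact_mod_cast (by omega : n ≤ 0)
      apply key 0
      apply isPreconnected_Ico.intermediate_value mh m0 hf.continuousOn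
      rw [hn', h0]
      constructor <;> [skip; skip] <;> push_cast <;> nlinarith
    · have hle : (2 : ℝ) ≤ n := by exact_mod_cast (by omega : 2 ≤ n)
      apply key 1
      apply isPreconnected_Ico.intermediate_value m0 mh hf.continuousOn
      rw [hn', h0]
      constructor <;> push_cast <;> nlinarith
  rw [hn', hn1]; simp

lemma dl_core (L : ℝ) (hL : 0 < L) (x y u v a b : ℝ → ℝ) (k : ℝ → ℝ → ℝ)
    (hx : ∀ t, HasDerivAt x (u t) t) (hy : ∀ t, HasDerivAt y (v t) t)
    (hu : ∀ t, HasDerivAt u (a t) t) (hv : ∀ t, HasDerivAt v (b t) t)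
    (ha : Continuous a) (hb : Continuous b)
    (hxp : ∀ s, x (s + L) = x s) (hyp : ∀ s, y (s + L) = y s)
    (hup : ∀ s, u (s + L) = u s) (hvp : ∀ s, v (s + L) = v s)
    (huv : ∀ s, u s ^ 2 + v s ^ 2 = 1)
    (hinj : ∀ s t, x s = x t → y s = y t → ∃ n : ℤ, t = s + n * L)
    (hor : ∫ t in (0:ℝ)..L, (b t * u t - a t * v t) = 2 * π)
    (hk : Continuous (fun p : ℝ × ℝ => k p.1 p.2))
    (hoff : ∀ s t, ¬ (x s = x t ∧ y s = y t) → k s t =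
      ((x s - x t) * v t - (y s - y t) * u t) / ((x s - x t) ^ 2 + (y s - y t) ^ 2))
    (hdiag : ∀ t, k t t = (1 / 2) * (a t * v t - b t * u t)) :
    (((1 / π ^ 2) * ∫ s in (0:ℝ)..L, ∫ t in (0:ℝ)..L, (k s t) ^ 2) = 1)
      ↔ ∃ c d R : ℝ, 0 < R ∧ ∀ s, (x s - c) ^ 2 + (y s - d) ^ 2 = R ^ 2 := by
  have hpi := Real.pi_pos
  have hk2 : Continuous (Function.uncurry k) := hk
  have hkc : ∀ {f g : ℝ → ℝ}, Continuous f → Continuous g → Continuous fun t => k (f t) (g t) :=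
    fun {f g} hf hg => hk.comp (hf.prodMk hg)
  have hxc : Continuous x := continuous_iff_continuousAt.2 fun t => (hx t).continuousAt
  have hyc : Continuous y := continuous_iff_continuousAt.2 fun t => (hy t).continuousAt
  have huc : Continuous u := continuous_iff_continuousAt.2 fun t => (hu t).continuousAt
  have hvc : Continuous v := continuous_iff_continuousAt.2 fun t => (hv t).continuousAt
  -- density of the off-diagonal points
  have hdense : ∀ s, Dense {t : ℝ | ¬ (x s = x t ∧ y s = y t)} := by
    intro s
    have : {t : ℝ | x s = x t ∧ y s = y t}.Countable := by
      apply (Set.countable_range (fun n : ℤ => s + n * L)).mono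
      rintro t ⟨h1, h2⟩
      obtain ⟨n, hn⟩ := hinj s t h1 h2
      exact ⟨n, hn.symm⟩
    exact this.dense_compl ℝ
  have hper1 : ∀ s t, k s (t + L) = k s t := by
    intro s
    have := Continuous.ext_on (hdense s) (f := fun t => k s (t + L)) (g := fun t => k s t)
      (hkc (by fun_prop) (by fun_prop)) (hkc (by fun_prop) (by fun_prop)) (by
        intro t ht
        simp only [Set.mem_ofPred_eq] at ht
        simp only
        rw [hoff s t ht, hoff s (t + L) (by rw [hxp, hyp]; exact ht), hxp, hyp, hup, hvp])
    exact fun t => congrFun this t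
  have hper2 : ∀ s t, k (s + L) t = k s t := by
    intro s
    have := Continuous.ext_on (hdense s) (f := fun t => k (s + L) t) (g := fun t => k s t)
      (hkc (by fun_prop) (by fun_prop)) (hkc (by fun_prop) (by fun_prop)) (by
        intro t ht
        simp only [Set.mem_ofPred_eq] at ht
        simp only
        rw [hoff s t ht, hoff (s + L) t (by rw [hxp, hyp]; exact ht), hxp, hyp])
    exact fun t => congrFun this t
  have hdiagint : ∫ t in (0:ℝ)..L, k t t = -π := by
    have : (fun t => k t t) = fun t => (-(1/2)) * (b t * u t - a t * v t) := by
      ext t; rw [hdiag]; ring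
    rw [this, intervalIntegral.integral_const_mul, hor]; ring
  -- the rotation number of the secant direction
  set N : ℝ → ℝ := fun h => ∫ s in (0:ℝ)..L, -(k s (s + h) + k (s + h) s) with hN
  have hNc : Continuous N := by
    apply continuous_parametric_intervalIntegral_of_continuous' (f := fun h s =>
      -(k s (s + h) + k (s + h) s))
    have h1 : Continuous fun p : ℝ × ℝ => k p.2 (p.2 + p.1) :=
      hk.comp (continuous_snd.prodMk (continuous_snd.add continuous_fst))
    have h2 : Continuous fun p : ℝ × ℝ => k (p.2 + p.1) p.2 :=
      hk.comp ((continuous_snd.add continuous_fst).prodMk continuous_snd)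
    exact (h1.add h2).neg
  have hN0 : N 0 = 2 * π := by
    have : (fun s => -(k s (s + 0) + k (s + 0) s)) = fun s => (-2) * k s s := by
      ext s; rw [add_zero]; ring
    simp only [hN]
    rw [this, intervalIntegral.integral_const_mul, hdiagint]; ring
  have hNn : ∀ h, 0 < h → h < L → ∃ n : ℤ, N h = n * (2 * π) := by
    intro h h0 h1
    have hoffd : ∀ s, ¬ (x s = x (s + h) ∧ y s = y (s + h)) := by
      rintro s ⟨e1, e2⟩
      obtain ⟨n, hn⟩ := hinj s (s + h) e1 e2
      have hn' : h = n * L := by linarith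
      have p1 : (0:ℝ) < n := by
        by_contra hc
        push Not at hc
        nlinarith
      have p2 : (n:ℝ) < 1 := by
        by_contra hc
        push Not at hc
        nlinarith
      have p1' : 0 < n := by exact_mod_cast p1
      have p2' : n < 1 := by exact_mod_cast p2
      omega
    have hd : ∀ {f g : ℝ → ℝ}, (∀ t, HasDerivAt f (g t) t) →
        ∀ t, HasDerivAt (fun s => f (s + h) - f s) (g (t + h) - g t) t := by
      intro f g hf t
      exact ((hf (t + h)).comp_add_const t h).sub (hf t)
    have hne : ∀ t, (x (t + h) - x t) ^ 2 + (y (t + h) - y t) ^ 2 ≠ 0 := by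
      intro t ht
      apply hoffd t
      constructor <;> nlinarith [sq_nonneg (x (t + h) - x t), sq_nonneg (y (t + h) - y t)]
    obtain ⟨n, hn⟩ := dl_winding _ _ _ _ (hd hx) (hd hy) (by fun_prop) (by fun_prop) hne L
      (by rw [add_comm L h, hxp, zero_add]
          have := hxp 0
          rw [zero_add] at this; rw [this])
      (by rw [add_comm L h, hyp, zero_add]
          have := hyp 0
          rw [zero_add] at this; rw [this])
    refine ⟨n, ?_⟩
    rw [← hn]
    simp only [hN]
    congr 1
    ext s
    have hs := hoffd s
    have hs' : ¬ (x (s + h) = x s ∧ y (s + h) = y s) := fun hh => hs ⟨hh.1.symm, hh.2.symm⟩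
    rw [hoff _ _ hs, hoff _ _ hs']
    have e : (x s - x (s + h)) ^ 2 + (y s - y (s + h)) ^ 2 =
      (x (s + h) - x s) ^ 2 + (y (s + h) - y s) ^ 2 := by ring
    rw [e, ← add_div, ← neg_div]
    congr 1
    ring
  have hNconst := dl_ivt N hNc L hN0 hNn
  -- the total integral of the kernel
  have htot : ∫ s in (0:ℝ)..L, ∫ t in (0:ℝ)..L, k s t = -(π * L) := by
    have h1 : ∫ h in (0:ℝ)..L, N h = 2 * π * L := by
      have : ∫ h in (0:ℝ)..L, N h = ∫ h in (0:ℝ)..L, 2 * π := by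
        apply intervalIntegral.integral_congr_Ioo_of_le hL.le
        intro h hh
        exact hNconst h hh.1 hh.2
      rw [this]; simp; ring
    have hc1 : Continuous fun p : ℝ × ℝ => k p.2 (p.2 + p.1) :=
      hk.comp (continuous_snd.prodMk (continuous_snd.add continuous_fst))
    have hc2 : Continuous fun p : ℝ × ℝ => k (p.2 + p.1) p.2 :=
      hk.comp ((continuous_snd.add continuous_fst).prodMk continuous_snd)
    have h2 : ∫ h in (0:ℝ)..L, N h = ∫ s in (0:ℝ)..L, ∫ h in (0:ℝ)..L,
        -(k s (s + h) + k (s + h) s) :=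
      dl_swap_s4 (fun h s => -(k s (s + h) + k (s + h) s)) (hc1.add hc2).neg L hL
    have h3 : ∀ s, ∫ h in (0:ℝ)..L, -(k s (s + h) + k (s + h) s) =
        -((∫ t in (0:ℝ)..L, k s t) + ∫ t in (0:ℝ)..L, k t s) := by
      intro s
      have p1 : ∫ h in (0:ℝ)..L, k s (s + h) = ∫ t in (0:ℝ)..L, k s t := by
        rw [intervalIntegral.integral_comp_add_left (fun t => k s t) s, add_zero]
        have := Function.Periodic.intervalIntegral_add_eq (f := fun t => k s t) (hper1 s) s 0
        simpa using this
      have p2 : ∫ h in (0:ℝ)..L, k (s + h) s = ∫ t in (0:ℝ)..L, k t s := by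
        rw [intervalIntegral.integral_comp_add_left (fun t => k t s) s, add_zero]
        have := Function.Periodic.intervalIntegral_add_eq (f := fun t => k t s)
          (fun t => hper2 t s) s 0
        simpa using this
      rw [intervalIntegral.integral_neg, intervalIntegral.integral_add, p1, p2]
      · exact (hkc (by fun_prop) (by fun_prop)).intervalIntegrable _ _
      · exact (hkc (by fun_prop) (by fun_prop)).intervalIntegrable _ _
    simp only [h3] at h2
    have hk3 : Continuous (Function.uncurry fun s t => k t s) := hk.comp continuous_swap
    rw [intervalIntegral.integral_neg, intervalIntegral.integral_add] at h2
    · have h4 := dl_swap_s4 k hk2 L hL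
      rw [← h4, h1] at h2
      linarith
    · exact (continuous_parametric_intervalIntegral_of_continuous' hk2 _ _).intervalIntegrable _ _
    · exact (continuous_parametric_intervalIntegral_of_continuous' hk3 _ _).intervalIntegrable _ _
  have hderuv : ∀ t, u t * a t + v t * b t = 0 := by
    intro t
    have h1 := ((hu t).pow 2).add ((hv t).pow 2)
    have h2 : (u ^ 2 + v ^ 2) = fun _ => (1:ℝ) := by
      ext s; simpa using huv s
    rw [h2] at h1
    have := h1.unique (hasDerivAt_const t (1:ℝ))
    simp at this
    linarith
  constructor
  · intro htr
    have hS : ∫ s in (0:ℝ)..L, ∫ t in (0:ℝ)..L, (k s t) ^ 2 = π ^ 2 := by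
      field_simp at htr
      exact htr
    set m : ℝ := π / L with hm
    have hmL : m * L = π := by rw [hm]; field_simp
    have hm0 : 0 < m := div_pos hpi hL
    have hkk : Continuous (Function.uncurry fun s t => (k s t) ^ 2) := hk.pow 2
    have hF : Continuous (Function.uncurry fun s t => (k s t + m) ^ 2) :=
      (hk.add continuous_const).pow 2
    have hFs := continuous_parametric_intervalIntegral_of_continuous' (μ := volume) hF 0 L
    have hin : ∀ s, ∫ t in (0:ℝ)..L, (k s t + m) ^ 2 = (∫ t in (0:ℝ)..L, (k s t) ^ 2) +
        (2 * m) * (∫ t in (0:ℝ)..L, k s t) + m ^ 2 * L := by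
      intro s
      have c1 : Continuous fun t => k s t := hkc (by fun_prop) (by fun_prop)
      have : (fun t => (k s t + m) ^ 2) = fun t => (k s t) ^ 2 + (2 * m) * k s t + m ^ 2 := by
        ext t; ring
      rw [this, intervalIntegral.integral_add, intervalIntegral.integral_add,
        intervalIntegral.integral_const_mul, intervalIntegral.integral_const]
      · simp; ring
      all_goals exact Continuous.intervalIntegrable (by fun_prop) _ _
    have hzero : ∫ s in (0:ℝ)..L, ∫ t in (0:ℝ)..L, (k s t + m) ^ 2 = 0 := by
      have c1 := continuous_parametric_intervalIntegral_of_continuous' (μ := volume) hkk 0 L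
      have c2 := continuous_parametric_intervalIntegral_of_continuous' (μ := volume) hk2 0 L
      simp only [hin]
      rw [intervalIntegral.integral_add, intervalIntegral.integral_add,
        intervalIntegral.integral_const_mul, intervalIntegral.integral_const, hS, htot]
      · simp only [smul_eq_mul, sub_zero]
        rw [← hmL]; ring
      all_goals exact Continuous.intervalIntegrable (by fun_prop) _ _
    have hkm : ∀ s ∈ Set.Icc 0 L, k s s = -m := by
      intro s hs
      by_contra hne
      have hpos : 0 < (k s s + m) ^ 2 := by
        have : k s s + m ≠ 0 := fun h => hne (by linarith)
        positivity
      have hc : Continuous fun t => (k s t + m) ^ 2 :=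
        ((hkc continuous_const continuous_id).add continuous_const).pow 2
      have h1 : 0 < ∫ t in (0:ℝ)..L, (k s t + m) ^ 2 :=
        intervalIntegral.integral_pos hL hc.continuousOn (fun _ _ => sq_nonneg _) ⟨s, hs, hpos⟩
      have h2 := intervalIntegral.integral_pos hL hFs.continuousOn
        (fun s _ => intervalIntegral.integral_nonneg hL.le (fun _ _ => sq_nonneg _)) ⟨s, hs, h1⟩
      exact absurd hzero h2.ne'
    have hkm' : ∀ s, k s s = -m := by
      intro s
      have hp : Function.Periodic (fun s => k s s) L := fun s => by
        simp only; rw [hper1, hper2]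
      obtain ⟨r, hr, hre⟩ := hp.exists_mem_Ico₀ hL s
      exact hre.trans <| hkm r (Set.Ico_subset_Icc_self hr)
    have hcurv : ∀ t, b t * u t - a t * v t = 2 * m := by
      intro t
      have := hkm' t
      rw [hdiag] at this
      linarith
    have hA : ∀ t, a t = - (2 * m) * v t := by
      intro t
      linear_combination (- v t) * hcurv t + u t * hderuv t - a t * huv t
    have hB : ∀ t, b t = (2 * m) * u t := by
      intro t
      linear_combination (u t) * hcurv t + v t * hderuv t - b t * huv t
    have c1 : ∀ t, HasDerivAt (fun s => x s - v s / (2 * m)) 0 t := by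
      intro t
      have := (hx t).sub ((hv t).div_const (2 * m))
      have e : u t - b t / (2 * m) = 0 := by rw [hB]; field_simp; ring
      exact e ▸ this
    have c2 : ∀ t, HasDerivAt (fun s => y s + u s / (2 * m)) 0 t := by
      intro t
      have := (hy t).add ((hu t).div_const (2 * m))
      have e : v t + a t / (2 * m) = 0 := by rw [hA]; field_simp; ring
      exact e ▸ this
    have d1 := is_const_of_deriv_eq_zero (fun t => (c1 t).differentiableAt)
      (fun t => (c1 t).deriv)
    have d2 := is_const_of_deriv_eq_zero (fun t => (c2 t).differentiableAt)
      (fun t => (c2 t).deriv)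
    refine ⟨x 0 - v 0 / (2 * m), y 0 + u 0 / (2 * m), 1 / (2 * m), by positivity, ?_⟩
    intro s
    have e1 := d1 0 s
    have e2 := d2 0 s
    rw [e1, e2]
    have := huv s
    field_simp
    linear_combination this
  · rintro ⟨c, d, R, hR, hcirc⟩
    have hperp : ∀ t, (x t - c) * u t + (y t - d) * v t = 0 := by
      intro t
      have h1 := (((hx t).sub_const c).pow 2).add (((hy t).sub_const d).pow 2)
      have h2 : ((fun s => x s - c) ^ 2 + (fun s => y s - d) ^ 2) = fun _ => R ^ 2 := by
        ext s; simpa using hcirc s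
      rw [h2] at h1
      have := h1.unique (hasDerivAt_const t (R ^ 2))
      simp at this
      linarith
    have hsq : ∀ s t, (k s t) ^ 2 = (1 / (2 * R)) ^ 2 := by
      intro s
      have := Continuous.ext_on (hdense s) (f := fun t => (k s t) ^ 2)
        (g := fun t => (1 / (2 * R)) ^ 2)
        ((hkc (by fun_prop) (by fun_prop)).pow 2) (by fun_prop) (by
          intro t ht
          simp only [Set.mem_ofPred_eq] at ht
          simp only
          rw [hoff s t ht]
          have hD : (x s - x t) ^ 2 + (y s - y t) ^ 2 ≠ 0 := by
            intro h
            apply ht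
            constructor <;> nlinarith [sq_nonneg (x s - x t), sq_nonneg (y s - y t)]
          -- `(x t - c, y t - d) = w (v t, - u t)` with `w ^ 2 = R ^ 2`
          obtain ⟨w, hw1, hw2⟩ : ∃ w, x t - c = w * v t ∧ y t - d = - w * u t := by
            refine ⟨(x t - c) * v t - (y t - d) * u t, ?_, ?_⟩
            · linear_combination (-(x t - c)) * huv t + u t * hperp t
            · linear_combination (-(y t - d)) * huv t + v t * hperp t
          have hwR : w ^ 2 = R ^ 2 := by
            have := hcirc t
            rw [hw1, hw2] at this
            linear_combination this - w ^ 2 * huv t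
          have hnum : 2 * w * ((x s - x t) * v t - (y s - y t) * u t) =
              -((x s - x t) ^ 2 + (y s - y t) ^ 2) := by
            have e1 := hcirc s
            have e2 := hcirc t
            linear_combination e1 - e2 - 2 * (x s - x t) * hw1 - 2 * (y s - y t) * hw2
          have hnum2 : 4 * R ^ 2 * ((x s - x t) * v t - (y s - y t) * u t) ^ 2 =
              ((x s - x t) ^ 2 + (y s - y t) ^ 2) ^ 2 := by
            rw [← hwR]
            linear_combination (2 * w * ((x s - x t) * v t - (y s - y t) * u t) -
              ((x s - x t) ^ 2 + (y s - y t) ^ 2)) * hnum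
          rw [div_pow, div_pow, div_eq_div_iff (by positivity) (by positivity)]
          linear_combination hnum2)
      exact fun t => congrFun this t
    have hLR : (L / (2 * R)) ^ 2 = π ^ 2 := by
      rcases isPreconnected_univ.eq_or_eq_neg_of_sq_eq (f := fun t => k t t)
        (g := fun _ => 1 / (2 * R)) (hkc continuous_id continuous_id).continuousOn
        continuousOn_const (fun t _ => by simpa using hsq t t)
        (fun {_} _ => by positivity) with h | h
      · have h1 : (fun t => k t t) = fun _ => 1 / (2 * R) := funext fun t => h (Set.mem_univ t)
        rw [h1] at hdiagint
        simp only [intervalIntegral.integral_const, smul_eq_mul, sub_zero] at hdiagint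
        rw [← neg_sq π, ← hdiagint]; ring
      · have h1 : (fun t => k t t) = fun _ => -(1 / (2 * R)) :=
          funext fun t => h (Set.mem_univ t)
        rw [h1] at hdiagint
        simp only [intervalIntegral.integral_const, smul_eq_mul, sub_zero] at hdiagint
        rw [← neg_sq π, ← hdiagint]; ring
    simp only [hsq, intervalIntegral.integral_const, smul_eq_mul, sub_zero]
    have : L * (L * (1 / (2 * R)) ^ 2) = π ^ 2 := by rw [← hLR]; ring
    rw [this]
    field_simp

/-- The trace of `K*K` equals 1 iff the boundary curve is a circle. -/
theorem double_layer_trace_eq_one_iff_circle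
    (L : ℝ) (hL : 0 < L)
    (q : ℝ → EuclideanSpace ℝ (Fin 2))
    (hq : ContDiff ℝ 2 q)
    (hper : ∀ s, q (s + L) = q s)
    (hunit : ∀ s, ‖deriv q s‖ = 1)
    (hinj : Set.InjOn q (Set.Ico 0 L))
    (horient : (∫ t in (0:ℝ)..L,
      (deriv (deriv q) t 1 * deriv q t 0 - deriv (deriv q) t 0 * deriv q t 1)) = 2 * π)
    (ktil : ℝ → ℝ → ℝ)
    (hcont : Continuous (fun p : ℝ × ℝ => ktil p.1 p.2))
    (hoff : ∀ s t, q s ≠ q t → ktil s t = dlKernel q s t)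
    (hdiag : ∀ t, ktil t t = dlDiag q t) :
    (((1 / π ^ 2) * ∫ s in (0:ℝ)..L, ∫ t in (0:ℝ)..L, (ktil s t) ^ 2) = 1)
      ↔ ∃ c : EuclideanSpace ℝ (Fin 2), ∃ R : ℝ, 0 < R ∧ ∀ s : ℝ, ‖q s - c‖ = R := by
  have hq1 : Differentiable ℝ q := hq.differentiable (by norm_num)
  have hq' : ContDiff ℝ 1 (deriv q) := by
    have : ContDiff ℝ (1 + 1) q := by simpa [one_add_one_eq_two] using hq
    exact (contDiff_succ_iff_deriv.1 this).2.2
  have hq2 : Differentiable ℝ (deriv q) := hq'.differentiable (by norm_num)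
  have hq2c : Continuous (deriv (deriv q)) := hq'.continuous_deriv (by norm_num)
  have hco : ∀ (f : ℝ → EuclideanSpace ℝ (Fin 2)), Differentiable ℝ f → ∀ (i : Fin 2) (t : ℝ),
      HasDerivAt (fun s => f s i) (deriv f t i) t := by
    intro f hf i t
    have := (EuclideanSpace.proj (𝕜 := ℝ) i).hasFDerivAt.comp_hasDerivAt t (hf t).hasDerivAt
    exact this
  have hcc : ∀ i : Fin 2, Continuous fun t => deriv (deriv q) t i := fun i =>
    (EuclideanSpace.proj (𝕜 := ℝ) i).continuous.comp hq2c
  have hnorm : ∀ w : EuclideanSpace ℝ (Fin 2), ‖w‖ ^ 2 = w 0 ^ 2 + w 1 ^ 2 := by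
    intro w
    rw [EuclideanSpace.norm_sq_eq]; simp
  have hext : ∀ s t, q s = q t ↔ (q s 0 = q t 0 ∧ q s 1 = q t 1) := by
    intro s t
    constructor
    · intro h; rw [h]; exact ⟨rfl, rfl⟩
    · rintro ⟨h0, h1⟩
      ext i
      fin_cases i
      · exact h0
      · exact h1
  have hdper : ∀ s, deriv q (s + L) = deriv q s := by
    intro s
    rw [← deriv_comp_add_const]
    congr 1
    ext1 r
    exact hper r
  have hP : Function.Periodic q L := hper
  have main := dl_core L hL (fun s => q s 0) (fun s => q s 1) (fun s => deriv q s 0)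
    (fun s => deriv q s 1) (fun s => deriv (deriv q) s 0) (fun s => deriv (deriv q) s 1) ktil
    (hco q hq1 0) (hco q hq1 1) (hco _ hq2 0) (hco _ hq2 1) (hcc 0) (hcc 1)
    (fun s => by simp only [hper]) (fun s => by simp only [hper])
    (fun s => by simp only [hdper]) (fun s => by simp only [hdper])
    (fun s => by
      have := hnorm (deriv q s)
      rw [hunit] at this
      linarith)
    (by
      intro s t h0 h1
      have hst : q s = q t := (hext s t).2 ⟨h0, h1⟩
      have e : toIcoMod hL 0 s = toIcoMod hL 0 t := by
        apply hinj
        · simpa using toIcoMod_mem_Ico hL 0 s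
        · simpa using toIcoMod_mem_Ico hL 0 t
        · rw [toIcoMod, toIcoMod, hP.sub_zsmul_eq, hP.sub_zsmul_eq, hst]
      refine ⟨toIcoDiv hL 0 t - toIcoDiv hL 0 s, ?_⟩
      simp only [toIcoMod, zsmul_eq_mul] at e
      push_cast
      linarith)
    horient hcont
    (by
      intro s t h
      rw [hoff s t (fun hh => h ((hext s t).1 hh)), dlKernel, hnorm]
      simp)
    (fun t => hdiag t)
  rw [main]
  constructor
  · rintro ⟨c, d, R, hR, h⟩
    refine ⟨!₂[c, d], R, hR, fun s => ?_⟩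
    rw [← sq_eq_sq₀ (norm_nonneg _) hR.le, hnorm]
    simpa using h s
  · rintro ⟨c, R, hR, h⟩
    refine ⟨c 0, c 1, R, hR, fun s => ?_⟩
    rw [← h s, hnorm]
    simp
end

section
/- If the double layer potential annihilates all mean-zero functions — that is, if for every continuous L-periodic function ψ : ℝ → ℝ with ∫₀^L ψ(t) dt = 0 one has ∫₀^L k(s,t) ψ(t) dt = 0 for all s ∈ ℝ — then the boundary curve is a circle: there exist c ∈ ℝ² and R > 0 such that ‖q(s) − c‖ = R for all s. -/
open Real Filter Topology MeasureTheory intervalIntegral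

/-- If the double layer potential annihilates all mean-zero continuous periodic functions,
then the boundary curve is a circle. -/
theorem double_layer_annihilates_mean_zero_implies_circle
    (L : ℝ) (hL : 0 < L)
    (q : ℝ → EuclideanSpace ℝ (Fin 2))
    (hq : ContDiff ℝ 2 q)
    (hper : ∀ s, q (s + L) = q s)
    (hunit : ∀ s, ‖deriv q s‖ = 1)
    (hinj : Set.InjOn q (Set.Ico 0 L))
    (horient : (∫ t in (0:ℝ)..L,
      (deriv (deriv q) t 1 * deriv q t 0 - deriv (deriv q) t 0 * deriv q t 1)) = 2 * π)
    (ktil : ℝ → ℝ → ℝ)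
    (hcont : Continuous (fun p : ℝ × ℝ => ktil p.1 p.2))
    (hoff : ∀ s t, q s ≠ q t → ktil s t = dlKernel q s t)
    (hdiag : ∀ t, ktil t t = dlDiag q t)
    (hK : ∀ ψ : ℝ → ℝ, Continuous ψ → (∀ t, ψ (t + L) = ψ t) →
      (∫ t in (0:ℝ)..L, ψ t) = 0 → ∀ s : ℝ, (∫ t in (0:ℝ)..L, ktil s t * ψ t) = 0) :
    ∃ c : EuclideanSpace ℝ (Fin 2), ∃ R : ℝ, 0 < R ∧ ∀ s : ℝ, ‖q s - c‖ = R := by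
  have hdq : Differentiable ℝ q := hq.differentiable (by norm_num)
  have hq1 : ContDiff ℝ 1 (deriv q) := by
    have h : ContDiff ℝ (1 + 1) q := by
      have : (1 + 1 : WithTop ℕ∞) = 2 := by norm_num
      rw [this]; exact hq
    exact (contDiff_succ_iff_deriv.1 h).2.2
  have hdq1 : Differentiable ℝ (deriv q) := hq1.differentiable (by norm_num)
  have hx : ∀ (i : Fin 2) t, HasDerivAt (fun t => q t i) (deriv q t i) t := fun i t =>
    (EuclideanSpace.proj i : EuclideanSpace ℝ (Fin 2) →L[ℝ] ℝ).hasFDerivAt.comp_hasDerivAt t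
      (hdq t).hasDerivAt
  have hx' : ∀ (i : Fin 2) t, HasDerivAt (fun t => deriv q t i) (deriv (deriv q) t i) t :=
    fun i t =>
    (EuclideanSpace.proj i : EuclideanSpace ℝ (Fin 2) →L[ℝ] ℝ).hasFDerivAt.comp_hasDerivAt t
      (hdq1 t).hasDerivAt
  have hnorm : ∀ v : EuclideanSpace ℝ (Fin 2), ‖v‖ ^ 2 = v 0 ^ 2 + v 1 ^ 2 := by
    intro v
    rw [EuclideanSpace.norm_sq_eq]
    simp [Fin.sum_univ_two]
  have hu : ∀ t, deriv q t 0 ^ 2 + deriv q t 1 ^ 2 = 1 := by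
    intro t
    rw [← hnorm, hunit]; norm_num
  have hu' : ∀ t, deriv q t 0 * deriv (deriv q) t 0 + deriv q t 1 * deriv (deriv q) t 1 = 0 := by
    intro t
    have h1 := ((hx' 0 t).pow 2).add ((hx' 1 t).pow 2)
    have h2 : HasDerivAt ((fun t => deriv q t 0) ^ 2 + (fun t => deriv q t 1) ^ 2) 0 t := by
      have : ((fun t => deriv q t 0) ^ 2 + (fun t => deriv q t 1) ^ 2 : ℝ → ℝ) = fun _ => 1 := by
        funext t; simpa using hu t
      rw [this]; exact hasDerivAt_const t 1
    have h3 := h1.unique h2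
    norm_num at h3
    linarith
  have hdper : ∀ t, deriv q (t + L) = deriv q t := by
    intro t
    have : (fun t => q (t + L)) = q := funext hper
    rw [← deriv_comp_add_const, this]
  have hcs : ∀ s, Continuous (ktil s) := fun s =>
    hcont.comp (continuous_const.prodMk continuous_id)
  -- periodicity of the extended kernel
  have hkper : ∀ s t, ktil s (t + L) = ktil s t := by
    intro s t
    have hne : ∀ᶠ r in 𝓝[≠] t, q r ≠ q s :=
      (hdq t).hasDerivAt.eventually_ne (by
        intro h0
        have := hunit t
        rw [h0] at this; simp at this)
    have h1 : Tendsto (fun r => ktil s (r + L)) (𝓝[≠] t) (𝓝 (ktil s (t + L))) :=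
      (((hcs s).comp (continuous_id.add continuous_const)).tendsto t).mono_left
        nhdsWithin_le_nhds
    have h2 : Tendsto (ktil s) (𝓝[≠] t) (𝓝 (ktil s t)) :=
      ((hcs s).tendsto t).mono_left nhdsWithin_le_nhds
    refine tendsto_nhds_unique (h1.congr' ?_) h2
    filter_upwards [hne] with r hr
    rw [hoff s r hr.symm, hoff s (r + L) (by rw [hper]; exact hr.symm)]
    simp only [dlKernel, hper, hdper]
  -- the kernel is constant in the second variable
  have hconst : ∀ s t, ktil s t = ktil s s := by
    intro s
    set m : ℝ := (∫ t in (0:ℝ)..L, ktil s t) / L with hm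
    have hc : Continuous (fun t => ktil s t - m) := (hcs s).sub continuous_const
    have hz : (∫ t in (0:ℝ)..L, (ktil s t - m)) = 0 := by
      rw [intervalIntegral.integral_sub ((hcs s).intervalIntegrable _ _) (by simp)]
      simp [hm]
      field_simp
      simp
    have h1 := hK (fun t => ktil s t - m) hc (fun t => by simp only [hkper]) hz s
    have h2 : (∫ t in (0:ℝ)..L, (ktil s t - m) ^ 2) = 0 := by
      have : ∀ t, (ktil s t - m) ^ 2 = ktil s t * (ktil s t - m) - m * (ktil s t - m) := by
        intro t; ring
      simp only [this]
      rw [intervalIntegral.integral_sub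
        (Continuous.intervalIntegrable (u := fun t => ktil s t * (ktil s t - m))
          ((hcs s).mul hc) _ _)
        (Continuous.intervalIntegrable (u := fun t => m * (ktil s t - m))
          (continuous_const.mul hc) _ _), h1,
        intervalIntegral.integral_const_mul, hz]
      simp
    have h3 : ∀ t ∈ Set.Icc 0 L, ktil s t = m := by
      intro t ht
      by_contra hne
      have hpos : 0 < ∫ t in (0:ℝ)..L, (ktil s t - m) ^ 2 :=
        intervalIntegral.integral_pos hL (hc.pow 2).continuousOn (fun _ _ => sq_nonneg _)
          ⟨t, ht, by have := sub_ne_zero.2 hne; positivity⟩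
      linarith
    have h4 : ∀ t, ktil s t = m := by
      intro t
      have hp : Function.Periodic (ktil s) L := hkper s
      obtain ⟨y, hy, hty⟩ := hp.exists_mem_Ico₀ hL t
      rw [hty]; exact h3 y ⟨hy.1, hy.2.le⟩
    intro t
    rw [h4, h4]
  set κ : ℝ → ℝ := fun t =>
    deriv (deriv q) t 1 * deriv q t 0 - deriv (deriv q) t 0 * deriv q t 1 with hκ
  have hx2 : ∀ t, deriv (deriv q) t 0 = - κ t * deriv q t 1 := by
    intro t
    simp only [hκ]
    linear_combination (-deriv (deriv q) t 0) * hu t + deriv q t 0 * hu' t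
  have hy2 : ∀ t, deriv (deriv q) t 1 = κ t * deriv q t 0 := by
    intro t
    simp only [hκ]
    linear_combination (-deriv (deriv q) t 1) * hu t + deriv q t 1 * hu' t
  have hD : ∀ s, ktil s s = - κ s / 2 := by
    intro s; rw [hdiag]; simp only [dlDiag, hκ]; ring
  have hE : ∀ s t, (q s 0 - q t 0) * deriv q t 1 - (q s 1 - q t 1) * deriv q t 0
      = (- κ s / 2) * ((q s 0 - q t 0) ^ 2 + (q s 1 - q t 1) ^ 2) := by
    intro s t
    by_cases h : q s = q t
    · simp [h]
    · have h1 := hoff s t h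
      rw [hconst, hD, dlKernel, hnorm] at h1
      have h2 : ‖q s - q t‖ ^ 2 ≠ 0 := by
        have := norm_ne_zero_iff.2 (sub_ne_zero.2 h)
        positivity
      rw [hnorm] at h2
      simp only [PiLp.sub_apply] at h1 h2
      rw [h1]; field_simp
  have hF : ∀ s t, (κ t - κ s) *
      ((q s 0 - q t 0) * deriv q t 0 + (q s 1 - q t 1) * deriv q t 1) = 0 := by
    intro s t
    have a0 := (hx 0 t).const_sub (q s 0)
    have a1 := (hx 1 t).const_sub (q s 1)
    have h1 := (a0.mul (hx' 1 t)).sub (a1.mul (hx' 0 t))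
    have h2 := ((a0.pow 2).add (a1.pow 2)).const_mul (- κ s / 2)
    have h3 := h1.congr_of_eventuallyEq (Eventually.of_forall (fun t => (hE s t).symm)) |>.unique h2
    norm_num at h3
    rw [hx2, hy2] at h3
    linear_combination h3
  have hloc : IsLocallyConstant κ := by
    rw [IsLocallyConstant.iff_eventually_eq]
    intro t
    have hg : HasDerivAt (fun s => (q s 0 - q t 0) * deriv q t 0 + (q s 1 - q t 1) * deriv q t 1)
        1 t := by
      have := (((hx 0 t).sub_const (q t 0)).mul_const (deriv q t 0)).add
        (((hx 1 t).sub_const (q t 1)).mul_const (deriv q t 1))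
      refine HasDerivAt.congr_deriv this ?_
      linarith [hu t]
    have hne := hg.eventually_ne (c := 0) one_ne_zero
    rw [eventually_nhdsWithin_iff] at hne
    filter_upwards [hne] with s hs
    by_cases hst : s = t
    · rw [hst]
    · have := (mul_eq_zero.1 (hF s t)).resolve_right (hs hst)
      linarith
  have hκc : ∀ t, κ t = κ 0 := fun t => hloc.apply_eq_of_isPreconnected isPreconnected_univ
    (Set.mem_univ _) (Set.mem_univ _)
  have hK0 : κ 0 ≠ 0 := by
    intro h0
    have h1 : (∫ t in (0:ℝ)..L, κ t) = 0 := by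
      simp only [hκc, h0]; simp
    rw [h1] at horient
    have := Real.pi_pos
    linarith
  have hc0 : ∀ t, q t 0 - deriv q t 1 / κ 0 = q 0 0 - deriv q 0 1 / κ 0 := by
    have hd : ∀ t, HasDerivAt (fun t => q t 0 - deriv q t 1 / κ 0) 0 t := by
      intro t
      refine HasDerivAt.congr_deriv ((hx 0 t).sub ((hx' 1 t).div_const (κ 0))) ?_
      rw [hy2, hκc]; field_simp; simp
    intro t
    exact is_const_of_deriv_eq_zero (fun t => (hd t).differentiableAt) (fun t => (hd t).deriv) t 0
  have hc1 : ∀ t, q t 1 + deriv q t 0 / κ 0 = q 0 1 + deriv q 0 0 / κ 0 := by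
    have hd : ∀ t, HasDerivAt (fun t => q t 1 + deriv q t 0 / κ 0) 0 t := by
      intro t
      refine HasDerivAt.congr_deriv ((hx 1 t).add ((hx' 0 t).div_const (κ 0))) ?_
      rw [hx2, hκc]; field_simp; simp
    intro t
    exact is_const_of_deriv_eq_zero (fun t => (hd t).differentiableAt) (fun t => (hd t).deriv) t 0
  refine ⟨!₂[q 0 0 - deriv q 0 1 / κ 0, q 0 1 + deriv q 0 0 / κ 0], |1 / κ 0|, by positivity, ?_⟩
  intro s
  rw [← abs_norm, ← sq_eq_sq_iff_abs_eq_abs, hnorm]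
  have e0 : q s 0 - (q 0 0 - deriv q 0 1 / κ 0) = deriv q s 1 / κ 0 := by linarith [hc0 s]
  have e1 : q s 1 - (q 0 1 + deriv q 0 0 / κ 0) = - (deriv q s 0 / κ 0) := by linarith [hc1 s]
  simp only [PiLp.sub_apply, Matrix.cons_val_zero, Matrix.cons_val_one]
  rw [e0, e1]
  field_simp
  linarith [hu s]
end

section
/- A closed unit-speed plane curve of constant curvature is a circle: if q : ℝ → ℝ² is an L-periodic, unit-speed, twice continuously differentiable simple closed curve with outward unit normal n(s) = (q'(s)₂, −q'(s)₁), and there is a constant c ∈ ℝ with ⟨q''(s), n(s)⟩ = c for all s, then there exist a point c₀ ∈ ℝ² and a radius R > 0 such that ‖q(s) − c₀‖ = R for all s ∈ ℝ. -/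
open Real Filter Topology MeasureTheory intervalIntegral

/-- A closed unit-speed plane curve of constant curvature is a circle: if `q` is an
`L`-periodic, unit-speed, `C²` simple closed curve with outward unit normal
`n(s) = (q'(s)₂, −q'(s)₁)` and `⟨q''(s), n(s)⟩ = c` for all `s`, then the image of `q`
lies on a circle. -/
theorem closed_curve_constant_curvature_is_circle
    (L : ℝ) (hL : 0 < L)
    (q : ℝ → EuclideanSpace ℝ (Fin 2))
    (hq : ContDiff ℝ 2 q)
    (hper : ∀ s, q (s + L) = q s)
    (hunit : ∀ s, ‖deriv q s‖ = 1)
    (hinj : Set.InjOn q (Set.Ico 0 L))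
    (c : ℝ)
    (hcurv : ∀ s : ℝ,
      deriv (deriv q) s 0 * deriv q s 1 - deriv (deriv q) s 1 * deriv q s 0 = c) :
    ∃ c₀ : EuclideanSpace ℝ (Fin 2), ∃ R : ℝ, 0 < R ∧ ∀ s : ℝ, ‖q s - c₀‖ = R := by
  have hdq : ∀ s, HasDerivAt q (deriv q s) s := fun s =>
    (hq.differentiable (by norm_num) s).hasDerivAt
  have hq1 : ContDiff ℝ 1 (deriv q) :=
    ((contDiff_succ_iff_deriv (n := 1) (f := q)).1 (by simpa [one_add_one_eq_two] using hq)).2.2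
  have hddq : ∀ s, HasDerivAt (deriv q) (deriv (deriv q) s) s := fun s =>
    (hq1.differentiable (by norm_num) s).hasDerivAt
  have hx : ∀ i s, HasDerivAt (fun t => q t i) (deriv q s i) s := fun i s => by
    have := (EuclideanSpace.proj i : EuclideanSpace ℝ (Fin 2) →L[ℝ] ℝ).hasFDerivAt.comp_hasDerivAt s
      (hdq s)
    simpa [Function.comp_def] using this
  have hxx : ∀ i s, HasDerivAt (fun t => deriv q t i) (deriv (deriv q) s i) s := fun i s => by
    have := (EuclideanSpace.proj i : EuclideanSpace ℝ (Fin 2) →L[ℝ] ℝ).hasFDerivAt.comp_hasDerivAt s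
      (hddq s)
    simpa [Function.comp_def] using this
  have hu : ∀ s, deriv q s 0 ^ 2 + deriv q s 1 ^ 2 = 1 := fun s => by
    have h := EuclideanSpace.real_norm_sq_eq (deriv q s)
    rw [hunit s, Fin.sum_univ_two] at h
    linarith
  have horth : ∀ s, deriv q s 0 * deriv (deriv q) s 0 + deriv q s 1 * deriv (deriv q) s 1 = 0 := by
    intro s
    have h1 := ((hxx 0 s).pow 2).add ((hxx 1 s).pow 2)
    have h2 : HasDerivAt (fun t => deriv q t 0 ^ 2 + deriv q t 1 ^ 2) 0 s := by
      simp only [hu]; exact hasDerivAt_const s 1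
    have h3 := h1.unique h2
    norm_num at h3
    linarith
  have hx2 : ∀ s, deriv (deriv q) s 0 = c * deriv q s 1 := fun s => by
    linear_combination deriv q s 1 * hcurv s + deriv q s 0 * horth s
      - deriv (deriv q) s 0 * hu s
  have hy2 : ∀ s, deriv (deriv q) s 1 = -c * deriv q s 0 := fun s => by
    linear_combination -deriv q s 0 * hcurv s + deriv q s 1 * horth s
      - deriv (deriv q) s 1 * hu s
  have hconst : ∀ f : ℝ → ℝ, (∀ s, HasDerivAt f 0 s) → ∀ s, f s = f 0 := fun f hf s =>
    is_const_of_deriv_eq_zero (fun t => (hf t).differentiableAt) (fun t => (hf t).deriv) s 0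
  have ha : ∀ s, deriv q s 0 - c * q s 1 = deriv q 0 0 - c * q 0 1 :=
    hconst (fun s => deriv q s 0 - c * q s 1) fun s => by
      have h := (hxx 0 s).sub ((hx 1 s).const_mul c)
      rw [hx2, sub_self] at h
      exact h
  have hb : ∀ s, deriv q s 1 + c * q s 0 = deriv q 0 1 + c * q 0 0 :=
    hconst (fun s => deriv q s 1 + c * q s 0) fun s => by
      have h := (hxx 1 s).add ((hx 0 s).const_mul c)
      rw [hy2, neg_mul, neg_add_cancel] at h
      exact h
  have hqL : q L = q 0 := by simpa using hper 0
  by_cases hc : c = 0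
  · exfalso
    subst hc
    have key : ∀ i, (∀ s, deriv q s i = deriv q 0 i) → deriv q 0 i = 0 := by
      intro i hi
      have h := hconst (fun s => q s i - s * deriv q 0 i) (fun s => by
        have h := (hx i s).sub ((hasDerivAt_id s).mul_const (deriv q 0 i))
        rw [hi s, one_mul, sub_self] at h
        exact h) L
      simp only [hqL] at h
      have : L * deriv q 0 i = 0 := by linarith
      exact (mul_eq_zero.1 this).resolve_left hL.ne'
    have h0 := key 0 (fun s => by linarith [ha s])
    have h1 := key 1 (fun s => by linarith [hb s])
    have := hu 0
    rw [h0, h1] at this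
    norm_num at this
  · refine ⟨!₂[(deriv q 0 1 + c * q 0 0) / c, -(deriv q 0 0 - c * q 0 1) / c], |c|⁻¹,
      by positivity, fun s => ?_⟩
    rw [← ha s, ← hb s, ← sq_eq_sq₀ (norm_nonneg _) (by positivity),
      EuclideanSpace.real_norm_sq_eq, Fin.sum_univ_two, inv_pow, sq_abs]
    simp
    field_simp
    linear_combination hu s
end

section
/- Suppose in addition that the closure of Ω is convex. Then there is no strictly positive continuous eigenfunction with eigenvalue of modulus less than 1: there exist no λ ∈ ℝ with |λ| < 1 and continuous L-periodic e : ℝ → ℝ with e(s) > 0 for all s satisfying λ·e(s) = (1/π) ∫₀^L k(s,t) e(t) dt for all s ∈ ℝ. (Consequently, a positive continuous eigenfunction of the double layer potential of a convex region must be constant, corresponding to the eigenvalue −1.) -/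
open Real Filter Topology MeasureTheory intervalIntegral

lemma dir_limit (Z : ℝ → ℂ) (v : ℂ) (a : ℝ) (h : HasDerivAt Z v a) (ha : Z a = 0) (hv : ‖v‖ = 1) :
    Tendsto (fun t => Z t / (‖Z t‖ : ℂ)) (𝓝[>] a) (𝓝 v) ∧
    Tendsto (fun t => Z t / (‖Z t‖ : ℂ)) (𝓝[<] a) (𝓝 (-v)) := by
  have hs := hasDerivAt_iff_tendsto_slope.1 h
  have h2 : Tendsto (fun t => slope Z a t / (‖slope Z a t‖ : ℂ)) (𝓝[≠] a) (𝓝 v) := by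
    have := hs.div (Complex.continuous_ofReal.continuousAt.tendsto.comp hs.norm) (by simp [hv])
    simpa [hv, Function.comp_def, Pi.div_def] using this
  constructor
  · refine (h2.mono_left (nhdsWithin_mono _ (fun x hx => ne_of_gt hx))).congr' ?_
    filter_upwards [self_mem_nhdsWithin] with t ht
    have ht' : 0 < t - a := sub_pos.2 ht
    have hne : ((t - a : ℝ) : ℂ) ≠ 0 := by exact_mod_cast ht'.ne'
    rw [slope_def_module, ha, sub_zero, norm_smul, Complex.real_smul, norm_inv, Real.norm_eq_abs,
      abs_of_pos ht']
    push_cast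
    push_cast at hne
    rw [mul_div_mul_left _ _ (inv_ne_zero hne)]
  · refine (h2.neg.mono_left (nhdsWithin_mono _ (fun x hx => ne_of_lt hx))).congr' ?_
    filter_upwards [self_mem_nhdsWithin] with t ht
    have ht' : t - a < 0 := sub_neg.2 ht
    have hne : ((t - a : ℝ) : ℂ) ≠ 0 := by exact_mod_cast ht'.ne
    rw [slope_def_module, ha, sub_zero, norm_smul, Complex.real_smul, norm_inv, Real.norm_eq_abs,
      abs_of_neg ht']
    push_cast
    push_cast at hne
    rw [inv_neg, neg_mul, div_neg, neg_neg, mul_div_mul_left _ _ (inv_ne_zero hne)]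

lemma winding (Z Z' : ℝ → ℂ) (φ : ℝ → ℝ) (a b : ℝ) (hab : a < b)
    (hZ : ∀ t, HasDerivAt Z (Z' t) t) (hφ : Continuous φ) (ha : Z a = 0) (hb : Z b = 0)
    (hne : ∀ t ∈ Set.Ioo a b, Z t ≠ 0) (hv : Z' b = Z' a) (hv1 : ‖Z' a‖ = 1)
    (him : ∀ t ∈ Set.Ioo a b, φ t = (Z' t / Z t).im) :
    Complex.exp (Complex.I * ((∫ t in a..b, φ t : ℝ) : ℂ)) = -1 := by
  set Φ : ℝ → ℝ := fun t => ∫ u in a..t, φ u with hΦ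
  have hΦd : ∀ t, HasDerivAt Φ (φ t) t := fun t =>
    intervalIntegral.integral_hasDerivAt_right (hφ.intervalIntegrable _ _)
      hφ.aestronglyMeasurable.stronglyMeasurableAtFilter hφ.continuousAt
  have hΦc : Continuous Φ := continuous_iff_continuousAt.2 fun t => (hΦd t).continuousAt
  set E : ℝ → ℂ := fun t => Complex.exp (-Complex.I * (Φ t : ℂ)) with hE
  have hEc : Continuous E := by
    simp only [hE]; fun_prop
  set F : ℝ → ℂ := fun t => Z t / (‖Z t‖ : ℂ) * E t with hF
  have hd : ∀ t ∈ Set.Ioo a b, HasDerivAt F 0 t := by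
    intro t ht
    have hz := hne t ht
    have hN : ‖Z t‖ ≠ 0 := norm_ne_zero_iff.2 hz
    have hNc : (‖Z t‖ : ℂ) ≠ 0 := by exact_mod_cast hN
    set m := Z' t / Z t with hm
    have hZ' : Z' t = m * Z t := by rw [hm]; field_simp
    have h1 := (hZ t).norm_sq
    have hin : inner ℝ (Z t) (Z' t) = m.re * ‖Z t‖ ^ 2 := by
      rw [hZ', Complex.inner, ← Complex.normSq_eq_norm_sq, Complex.normSq_apply]
      simp; ring
    have h2 : HasDerivAt (fun t => ‖Z t‖) (m.re * ‖Z t‖) t := by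
      have := h1.sqrt (pow_ne_zero 2 hN)
      simp only [Real.sqrt_sq (norm_nonneg _)] at this
      convert this using 1
      rw [hin]; field_simp
    have h3 := h2.ofReal_comp
    have h4 : HasDerivAt E (Complex.exp (-Complex.I * (Φ t : ℂ)) * (-Complex.I * (φ t : ℂ))) t :=
      ((hΦd t).ofReal_comp.const_mul (-Complex.I)).cexp
    have h5 := ((hZ t).div h3 hNc).mul h4
    refine h5.congr_deriv ?_
    rw [him t ht, ← hm, hZ']
    simp only [hE, Pi.div_apply]
    push_cast
    generalize Complex.exp (-Complex.I * (Φ t : ℂ)) = X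
    field_simp
    have := Complex.re_add_im m
    linear_combination (-Z t * X) * this
  obtain ⟨c, hc⟩ : ∃ c, ∀ t ∈ Set.Ioo a b, F t = c := by
    have hmid : (a + b) / 2 ∈ Set.Ioo a b := ⟨by linarith, by linarith⟩
    refine ⟨F ((a + b) / 2), fun t ht => ?_⟩
    exact isOpen_Ioo.is_const_of_deriv_eq_zero (convex_Ioo a b).isPreconnected
      (fun x hx => (hd x hx).differentiableAt.differentiableWithinAt)
      (fun x hx => (hd x hx).deriv) ht hmid
  have e1 : Tendsto F (𝓝[>] a) (𝓝 (Z' a * E a)) :=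
    (dir_limit Z _ a (hZ a) ha hv1).1.mul (hEc.continuousAt.tendsto.mono_left nhdsWithin_le_nhds)
  have e2 : Tendsto F (𝓝[<] b) (𝓝 (-Z' b * E b)) :=
    (dir_limit Z _ b (hZ b) hb (by rw [hv, hv1])).2.mul
      (hEc.continuousAt.tendsto.mono_left nhdsWithin_le_nhds)
  have c1 : Tendsto F (𝓝[>] a) (𝓝 c) := by
    refine tendsto_const_nhds.congr' ?_
    filter_upwards [Ioo_mem_nhdsGT hab] with t ht using (hc t ht).symm
  have c2 : Tendsto F (𝓝[<] b) (𝓝 c) := by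
    refine tendsto_const_nhds.congr' ?_
    filter_upwards [Ioo_mem_nhdsLT hab] with t ht using (hc t ht).symm
  have k1 := tendsto_nhds_unique e1 c1
  have k2 := tendsto_nhds_unique e2 c2
  have hEa : E a = 1 := by simp [hE, hΦ]
  have hv0 : Z' a ≠ 0 := by rw [← norm_ne_zero_iff, hv1]; norm_num
  rw [hEa, ← k2, hv] at k1
  have hEb : E b = -1 := by
    apply mul_left_cancel₀ hv0
    linear_combination k1
  have : Complex.exp (Complex.I * (Φ b : ℂ)) * E b = 1 := by
    simp only [hE]; rw [← Complex.exp_add]; simp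
  rw [hEb] at this
  change Complex.exp (Complex.I * (Φ b : ℂ)) = -1
  linear_combination -this

lemma ge_pi (x : ℝ) (hx : 0 ≤ x) (h : Complex.exp (Complex.I * (x : ℂ)) = -1) : π ≤ x := by
  by_contra! hlt
  have h1 : Real.cos x = -1 := by
    have := congrArg Complex.re h
    rw [mul_comm, Complex.exp_ofReal_mul_I_re] at this
    simpa using this
  have := Real.cos_lt_cos_of_nonneg_of_le_pi hx le_rfl hlt
  rw [h1, Real.cos_pi] at this
  exact lt_irrefl _ this

lemma per_int (L : ℝ) (hL : 0 < L) {E : Type*} (q : ℝ → E) (hper : ∀ s, q (s + L) = q s)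
    (hinj : Set.InjOn q (Set.Ico 0 L)) (u v : ℝ) (h : q u = q v) : ∃ n : ℤ, u - v = n * L := by
  have hp : Function.Periodic q L := hper
  have key : ∀ u, q (toIcoMod hL 0 u) = q u := fun u => by
    rw [toIcoMod]; exact hp.sub_zsmul_eq _
  have h1 := hinj (by simpa using toIcoMod_mem_Ico hL 0 u) (by simpa using toIcoMod_mem_Ico hL 0 v)
    ((key u).trans (h.trans (key v).symm))
  refine ⟨toIcoDiv hL 0 u - toIcoDiv hL 0 v, ?_⟩
  simp only [toIcoMod, zsmul_eq_mul] at h1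
  push_cast
  linarith

lemma inj_near (L : ℝ) (hL : 0 < L) {E : Type*} (q : ℝ → E) (hper : ∀ s, q (s + L) = q s)
    (hinj : Set.InjOn q (Set.Ico 0 L)) (u v : ℝ) (h : q u = q v) (h1 : |u - v| < L) : u = v := by
  obtain ⟨n, hn⟩ := per_int L hL q hper hinj u v h
  rw [hn, abs_mul, abs_of_pos hL] at h1
  have h2 : |(n : ℝ)| < 1 := by nlinarith
  have h3 : |n| < 1 := by exact_mod_cast h2
  have : n = 0 := Int.abs_lt_one_iff.1 h3
  subst this
  simp at hn; linarith

lemma not_interior (L : ℝ) (hL : 0 < L)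
    (q : ℝ → EuclideanSpace ℝ (Fin 2)) (hq : Continuous q)
    (hper : ∀ s, q (s + L) = q s) (hinj : Set.InjOn q (Set.Ico 0 L))
    (K : Set (EuclideanSpace ℝ (Fin 2))) (hK : Convex ℝ K) (hb : Bornology.IsBounded K)
    (hf : frontier K ⊆ Set.range q) (t : ℝ) : q t ∉ interior K := by
  intro hx
  obtain ⟨e, -, -, he⟩ := exists_homeomorph_image_eq hK ⟨_, hx⟩
    (NormedSpace.isVonNBounded_of_isBounded _ hb)
    (convex_ball (0 : EuclideanSpace ℝ (Fin 2)) 1) (by simp [Metric.isOpen_ball.interior_eq])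
    (NormedSpace.isVonNBounded_ball _ _ _)
  rw [frontier_ball _ one_ne_zero] at he
  set c : ℝ → EuclideanSpace ℝ (Fin 2) := fun θ => !₂[Real.cos θ, Real.sin θ] with hc
  have hcc : Continuous c := by
    rw [hc]; fun_prop
  have hcn : ∀ θ, c θ ∈ Metric.sphere (0 : EuclideanSpace ℝ (Fin 2)) 1 := by
    intro θ
    simp [hc, EuclideanSpace.norm_eq]
  set p : ℝ → EuclideanSpace ℝ (Fin 2) := fun θ => e.symm (c θ) with hp
  have hpc : Continuous p := e.symm.continuous.comp hcc
  have hpf : ∀ θ, p θ ∈ frontier K := by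
    intro θ
    have := hcn θ
    rw [← he] at this
    obtain ⟨y, hy, hye⟩ := this
    simp only [hp, ← hye, e.symm_apply_apply, hy]
  have hpne : ∀ θ, p θ ≠ q t := by
    intro θ h
    have := hpf θ
    rw [h] at this
    exact this.2 hx
  have hex : ∀ θ, ∃ τ : Set.Icc t (t + L), q τ = p θ := by
    intro θ
    obtain ⟨u, hu⟩ := hf (hpf θ)
    have hqp : Function.Periodic q L := hper
    obtain ⟨v, hv, hv'⟩ := hqp.exists_mem_Ico hL u t
    exact ⟨⟨v, Set.Ico_subset_Icc_self hv⟩, by rw [← hu, hv']⟩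
  choose f hff using hex
  have hinj' : ∀ (τ σ : Set.Icc t (t + L)) θ, q τ = p θ → q σ = p θ → τ = σ := by
    intro τ σ θ h1 h2
    have aux : ∀ τ : Set.Icc t (t + L), q τ = p θ → t < τ ∧ τ < t + L := by
      intro τ h
      constructor
      · refine lt_of_le_of_ne τ.2.1 fun h' => hpne θ ?_
        rw [← h, ← h']
      · refine lt_of_le_of_ne τ.2.2 fun h' => hpne θ ?_
        rw [← h, h', hper]
    have a1 := aux τ h1
    have a2 := aux σ h2
    apply Subtype.ext
    exact inj_near L hL q hper hinj _ _ (h1.trans h2.symm) (abs_lt.2 ⟨by linarith, by linarith⟩)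
  have hfc : Continuous f := by
    rw [continuous_iff_isClosed]
    intro C hC
    have : f ⁻¹' C = Prod.fst '' ({x : ℝ × Set.Icc t (t + L) | q x.2 = p x.1} ∩ Prod.snd ⁻¹' C) := by
      ext θ
      constructor
      · intro h
        exact ⟨(θ, f θ), ⟨hff θ, h⟩, rfl⟩
      · rintro ⟨⟨θ', τ⟩, ⟨h1, h2⟩, rfl⟩
        have := hinj' _ _ θ' (hff θ') h1
        simpa [this] using h2
    rw [this]
    apply isClosedMap_fst_of_compactSpace
    exact (isClosed_eq (by fun_prop) (by fun_prop)).inter (hC.preimage continuous_snd)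
  have hg : Continuous (fun θ => (f θ : ℝ) - f (θ + π)) := by fun_prop
  have hper2 : f (0 + π + π) = f 0 := by
    apply hinj' _ _ 0 _ (hff 0)
    rw [hff]; simp only [hp, hc]
    rw [show (0:ℝ) + π + π = 2 * π by ring]; simp
  have : ∃ θ, (f θ : ℝ) - f (θ + π) = 0 := by
    have h0 := intermediate_value_univ (0:ℝ) (0 + π) hg
    have h1 := intermediate_value_univ (0+π) (0:ℝ) hg
    simp only [hper2] at h0 h1
    rcases le_total ((f 0 : ℝ) - f (0+π)) 0 with h | h
    · exact h0 ⟨h, by linarith⟩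
    · exact h1 ⟨by linarith, h⟩
  obtain ⟨θ, hθ⟩ := this
  have h1 : f θ = f (θ + π) := Subtype.ext (by linarith)
  have h2 : p θ = p (θ + π) := by rw [← hff, ← hff, h1]
  have h3 : c θ = c (θ + π) := e.symm.injective h2
  have h4 := congrArg (fun v => v 0) h3
  have h5 := congrArg (fun v => v 1) h3
  simp [hc] at h4 h5
  have h6 : Real.cos θ = 0 := by linarith
  have h7 : Real.sin θ = 0 := by linarith
  have := Real.sin_sq_add_cos_sq θ
  rw [h6, h7] at this
  norm_num at this

lemma support (q : ℝ → EuclideanSpace ℝ (Fin 2)) (hq : Differentiable ℝ q)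
    (hunit : ∀ s, ‖deriv q s‖ = 1)
    (Ω : Set (EuclideanSpace ℝ (Fin 2))) (hΩopen : IsOpen Ω) (hne : Ω.Nonempty)
    (hconv : Convex ℝ (closure Ω)) (hmem : ∀ s, q s ∈ closure Ω) (t : ℝ)
    (ht : q t ∉ interior (closure Ω)) :
    (∀ s, (q s 0 - q t 0) * deriv q t 1 - (q s 1 - q t 1) * deriv q t 0 ≤ 0) ∨
    (∀ s, 0 ≤ (q s 0 - q t 0) * deriv q t 1 - (q s 1 - q t 1) * deriv q t 0) := by
  obtain ⟨f, hf⟩ := geometric_hahn_banach_open_point hconv.interior isOpen_interior ht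
  have hsub : Ω ⊆ interior (closure Ω) := hΩopen.subset_interior_closure
  have hle : ∀ x ∈ closure Ω, f x ≤ f (q t) := by
    intro x hx
    have : closure Ω ⊆ {x | f x ≤ f (q t)} :=
      closure_minimal (fun y hy => (hf y (hsub hy)).le) (isClosed_le f.continuous continuous_const)
    exact this hx
  have hd : HasDerivAt (fun s => f (q s)) (f (deriv q t)) t :=
    f.hasFDerivAt.comp_hasDerivAt t (hq t).hasDerivAt
  have h0 : f (deriv q t) = 0 := by
    refine IsLocalMax.hasDerivAt_eq_zero ?_ hd
    exact Filter.Eventually.of_forall fun s => hle _ (hmem s)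
  set c0 := f (EuclideanSpace.single 0 1)
  set c1 := f (EuclideanSpace.single 1 1)
  have hfx : ∀ x, f x = x 0 * c0 + x 1 * c1 := by
    intro x
    have : x = x 0 • EuclideanSpace.single 0 (1:ℝ) + x 1 • EuclideanSpace.single 1 (1:ℝ) := by
      ext i; fin_cases i <;> simp
    conv_lhs => rw [this]
    simp [c0, c1]
  have hn : deriv q t 0 ^ 2 + deriv q t 1 ^ 2 = 1 := by
    have := EuclideanSpace.real_norm_sq_eq (deriv q t)
    rw [hunit, Fin.sum_univ_two] at this
    linarith
  rw [hfx] at h0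
  set a := deriv q t 0
  set b := deriv q t 1
  have key : ∀ s, (c0 * b - c1 * a) * ((q s 0 - q t 0) * b - (q s 1 - q t 1) * a) ≤ 0 := by
    intro s
    have h := hle _ (hmem s)
    rw [hfx, hfx] at h
    have : (c0 * b - c1 * a) * ((q s 0 - q t 0) * b - (q s 1 - q t 1) * a)
       = (q s 0 - q t 0) * c0 + (q s 1 - q t 1) * c1 := by
      linear_combination ((q s 0 - q t 0) * c0 + (q s 1 - q t 1) * c1) * hn
        - ((q s 0 - q t 0) * a + (q s 1 - q t 1) * b) * h0
    rw [this]; linarith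
  rcases lt_trichotomy (c0 * b - c1 * a) 0 with h | h | h
  · right; intro s
    by_contra! hh
    nlinarith [key s, mul_pos_of_neg_of_neg h hh]
  · exfalso
    obtain ⟨y, hy⟩ := hne
    have h1 := hf y (hsub hy)
    have e0 : c0 = 0 := by linear_combination (-c0) * hn + a * h0 + b * h
    have e1 : c1 = 0 := by linear_combination (-c1) * hn + b * h0 - a * h
    rw [hfx, hfx, e0, e1] at h1
    simp at h1
  · left; intro s
    by_contra! hh
    nlinarith [key s, mul_pos h hh]

lemma dense_ne (q : ℝ → EuclideanSpace ℝ (Fin 2)) (hunit : ∀ s, ‖deriv q s‖ = 1)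
    (x : EuclideanSpace ℝ (Fin 2)) : Dense {t | q t ≠ x} := by
  change Dense ({t | q t = x}ᶜ)
  rw [← interior_eq_empty_iff_dense_compl]
  by_contra hne
  obtain ⟨t, ht⟩ := Set.nonempty_iff_ne_empty.2 hne
  have h1 : q =ᶠ[𝓝 t] fun _ => x := by
    filter_upwards [mem_interior_iff_mem_nhds.1 ht] with s hs using hs
  have h2 := hunit t
  rw [h1.deriv_eq] at h2
  simp at h2

/-- For a convex region there is no strictly positive continuous eigenfunction of the
double layer potential with eigenvalue of modulus less than 1. -/
theorem no_positive_eigenfunction_of_convex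
    (L : ℝ) (hL : 0 < L)
    (q : ℝ → EuclideanSpace ℝ (Fin 2))
    (hq : ContDiff ℝ 2 q)
    (hper : ∀ s, q (s + L) = q s)
    (hunit : ∀ s, ‖deriv q s‖ = 1)
    (hinj : Set.InjOn q (Set.Ico 0 L))
    (horient : (∫ t in (0:ℝ)..L,
      (deriv (deriv q) t 1 * deriv q t 0 - deriv (deriv q) t 0 * deriv q t 1)) = 2 * π)
    (Ω : Set (EuclideanSpace ℝ (Fin 2)))
    (hΩopen : IsOpen Ω) (hΩconn : IsConnected Ω)
    (hΩbd : Bornology.IsBounded Ω)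
    (hfront : frontier Ω = Set.range q)
    (hconv : Convex ℝ (closure Ω))
    (ktil : ℝ → ℝ → ℝ)
    (hcont : Continuous (fun p : ℝ × ℝ => ktil p.1 p.2))
    (hoff : ∀ s t, q s ≠ q t → ktil s t = dlKernel q s t)
    (hdiag : ∀ t, ktil t t = dlDiag q t) :
    ¬ ∃ (lam : ℝ) (e : ℝ → ℝ), |lam| < 1 ∧ Continuous e ∧ (∀ t, e (t + L) = e t) ∧
      (∀ s : ℝ, 0 < e s) ∧
      (∀ s : ℝ, lam * e s = (1 / π) * ∫ t in (0:ℝ)..L, ktil s t * e t) := by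
  have hqd : Differentiable ℝ q := hq.differentiable (by norm_num)
  have hqc : Continuous q := hqd.continuous
  have hq1 : ContDiff ℝ 1 (deriv q) := by
    have : ContDiff ℝ (1 + 1) q := by simpa [one_add_one_eq_two] using hq
    exact (contDiff_succ_iff_deriv.1 this).2.2
  have hq1d : Differentiable ℝ (deriv q) := hq1.differentiable (by norm_num)
  have hq1c : Continuous (deriv q) := hq1d.continuous
  have hco : ∀ (f : ℝ → EuclideanSpace ℝ (Fin 2)) (f' : EuclideanSpace ℝ (Fin 2)) (t : ℝ)
      (i : Fin 2), HasDerivAt f f' t → HasDerivAt (fun s => f s i) (f' i) t := by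
    intro f f' t i h
    exact (EuclideanSpace.proj (𝕜 := ℝ) i : EuclideanSpace ℝ (Fin 2) →L[ℝ] ℝ).hasFDerivAt.comp_hasDerivAt t h
  -- continuity of the sections of the kernel
  have hk1 : ∀ s, Continuous (fun t => ktil s t) := fun s =>
    hcont.comp (continuous_const.prodMk continuous_id)
  have hk2 : ∀ t, Continuous (fun s => ktil s t) := fun t =>
    hcont.comp (continuous_id.prodMk continuous_const)
  -- curve lies on one side of each tangent
  have hmem : ∀ s, q s ∈ closure Ω := fun s =>
    frontier_subset_closure (hfront ▸ Set.mem_range_self s)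
  have hni : ∀ t, q t ∉ interior (closure Ω) :=
    not_interior L hL q hqc hper hinj _ hconv hΩbd.closure
      (hfront ▸ frontier_closure_subset)
  have hside := fun t => support q hqd hunit Ω hΩopen hΩconn.nonempty hconv hmem t (hni t)
  have hgc : ∀ s, Continuous (fun t =>
      (q s 0 - q t 0) * deriv q t 1 - (q s 1 - q t 1) * deriv q t 0) := by
    intro s; fun_prop
  have hA : IsClosed {t | ∀ s, (q s 0 - q t 0) * deriv q t 1 - (q s 1 - q t 1) * deriv q t 0 ≤ 0} := by
    simp only [Set.setOf_forall]
    exact isClosed_iInter fun s => isClosed_le (hgc s) continuous_const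
  have hB : IsClosed {t | ∀ s, 0 ≤ (q s 0 - q t 0) * deriv q t 1 - (q s 1 - q t 1) * deriv q t 0} := by
    simp only [Set.setOf_forall]
    exact isClosed_iInter fun s => isClosed_le continuous_const (hgc s)
  have hdisj : ∀ t, ¬ ((∀ s, (q s 0 - q t 0) * deriv q t 1 - (q s 1 - q t 1) * deriv q t 0 ≤ 0) ∧
      (∀ s, 0 ≤ (q s 0 - q t 0) * deriv q t 1 - (q s 1 - q t 1) * deriv q t 0)) := by
    rintro t ⟨h1, h2⟩
    have h0 : ∀ s, (q s 0 - q t 0) * deriv q t 1 - (q s 1 - q t 1) * deriv q t 0 = 0 :=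
      fun s => le_antisymm (h1 s) (h2 s)
    have hd1 : ∀ s, deriv q s 0 * deriv q t 1 - deriv q s 1 * deriv q t 0 = 0 := by
      intro s
      have d := (((hco q _ s 0 (hqd s).hasDerivAt).sub_const (q t 0)).mul_const (deriv q t 1)).sub
        (((hco q _ s 1 (hqd s).hasDerivAt).sub_const (q t 1)).mul_const (deriv q t 0))
      refine d.unique ((hasDerivAt_const s (0:ℝ)).congr_of_eventuallyEq ?_)
      exact Filter.Eventually.of_forall fun s => h0 s
    have hd2 : ∀ s, deriv (deriv q) s 0 * deriv q t 1 - deriv (deriv q) s 1 * deriv q t 0 = 0 := by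
      intro s
      have d := ((hco (deriv q) _ s 0 (hq1d s).hasDerivAt).mul_const (deriv q t 1)).sub
        ((hco (deriv q) _ s 1 (hq1d s).hasDerivAt).mul_const (deriv q t 0))
      refine d.unique ((hasDerivAt_const s (0:ℝ)).congr_of_eventuallyEq ?_)
      exact Filter.Eventually.of_forall fun s => hd1 s
    have hn : deriv q t 0 ^ 2 + deriv q t 1 ^ 2 = 1 := by
      have := EuclideanSpace.real_norm_sq_eq (deriv q t)
      rw [hunit, Fin.sum_univ_two] at this
      linarith
    have hz : ∀ s, deriv (deriv q) s 1 * deriv q s 0 - deriv (deriv q) s 0 * deriv q s 1 = 0 := by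
      intro s
      have e1 := hd1 s
      have e2 := hd2 s
      generalize deriv (deriv q) s 0 = u0 at *
      generalize deriv (deriv q) s 1 = u1 at *
      generalize deriv q s 0 = v0 at *
      generalize deriv q s 1 = v1 at *
      generalize deriv q t 0 = a at *
      generalize deriv q t 1 = b at *
      linear_combination (-(u1 * v0 - u0 * v1)) * hn + (a * u0 + b * u1) * e1
        - (a * v0 + b * v1) * e2
    simp only [hz] at horient
    simp at horient
  have hkval : ∀ s t, q s ≠ q t → ktil s t =
      ((q s 0 - q t 0) * deriv q t 1 - (q s 1 - q t 1) * deriv q t 0) / ‖q s - q t‖ ^ 2 := hoff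
  have hneg : ∀ s t, (q s 0 - q t 0) * deriv q t 1 - (q s 1 - q t 1) * deriv q t 0 ≤ 0 := by
    have hall : (∀ t s, (q s 0 - q t 0) * deriv q t 1 - (q s 1 - q t 1) * deriv q t 0 ≤ 0) ∨
      (∀ t s, 0 ≤ (q s 0 - q t 0) * deriv q t 1 - (q s 1 - q t 1) * deriv q t 0) := by
      by_contra! hcon
      obtain ⟨⟨t1, s1, h1⟩, ⟨t2, s2, h2⟩⟩ := hcon
      have := isPreconnected_closed_iff.1 (isPreconnected_univ (α := ℝ)) _ _ hA hB
        (fun t _ => hside t)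
        ⟨t2, trivial, (hside t2).resolve_right fun h => absurd (h s2) (not_le.2 h2)⟩
        ⟨t1, trivial, (hside t1).resolve_left fun h => absurd (h s1) (not_le.2 h1)⟩
      obtain ⟨t, -, ha, hb⟩ := this
      exact hdisj t ⟨ha, hb⟩
    rcases hall with h | h
    · exact fun s t => h t s
    · exfalso
      have hpos : ∀ s t, 0 ≤ ktil s t := by
        intro s t
        have hcl : IsClosed {s | 0 ≤ ktil s t} := isClosed_le continuous_const (hk2 t)
        have : closure {s | q s ≠ q t} ⊆ {s | 0 ≤ ktil s t} := by
          refine closure_minimal (fun u hu => ?_) hcl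
          change 0 ≤ ktil u t
          rw [hkval u t hu]
          exact div_nonneg (h t u) (by positivity)
        exact this (dense_ne q hunit (q t) s)
      have : 0 ≤ ∫ t in (0:ℝ)..L,
        -(deriv (deriv q) t 1 * deriv q t 0 - deriv (deriv q) t 0 * deriv q t 1) := by
        refine intervalIntegral.integral_nonneg hL.le fun t _ => ?_
        have h3 := hpos t t
        rw [hdiag, dlDiag] at h3
        linarith
      rw [intervalIntegral.integral_neg, horient] at this
      linarith [Real.pi_pos]
  have hkneg : ∀ s t, ktil s t ≤ 0 := by
    intro s t
    have hcl : IsClosed {s | ktil s t ≤ 0} := isClosed_le (hk2 t) continuous_const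
    have : closure {s | q s ≠ q t} ⊆ {s | ktil s t ≤ 0} := by
      refine closure_minimal (fun u hu => ?_) hcl
      change ktil u t ≤ 0
      rw [hkval u t hu]
      exact div_nonpos_of_nonpos_of_nonneg (hneg u t) (by positivity)
    exact this (dense_ne q hunit (q t) s)
  have hdper : ∀ t, deriv q (t + L) = deriv q t := by
    intro t
    rw [← deriv_comp_add_const]
    congr 1; funext s; exact hper s
  have hkper : ∀ s t, ktil s (t + L) = ktil s t := by
    intro s
    have : (fun t => ktil s (t + L)) = fun t => ktil s t := by
      refine Continuous.ext_on (dense_ne q hunit (q s)) ((hk1 s).comp (by fun_prop)) (hk1 s) ?_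
      intro t ht
      have ht' : q s ≠ q t := fun h => ht h.symm
      simp only
      rw [hkval s t ht', hkval s (t + L) (by rwa [hper]), hper, hdper]
    exact fun t => congrFun this t
  -- total angle
  have hang : ∀ s, π ≤ ∫ t in (0:ℝ)..L, -ktil s t := by
    intro s
    have hp : Function.Periodic (fun t => -ktil s t) L := fun t => by simp [hkper]
    have := hp.intervalIntegral_add_eq 0 s
    rw [zero_add] at this
    rw [this]
    apply ge_pi
    · exact intervalIntegral.integral_nonneg (by linarith) fun t _ => by linarith [hkneg s t]
    · refine winding (fun t => ⟨q t 0 - q s 0, q t 1 - q s 1⟩)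
        (fun t => ⟨deriv q t 0, deriv q t 1⟩) (fun t => -ktil s t) s (s + L) (by linarith)
        ?_ (hk1 s).neg ?_ ?_ ?_ ?_ ?_ ?_
      · intro t
        have h0 := ((hco q _ t 0 (hqd t).hasDerivAt).sub_const (q s 0)).ofReal_comp
        have h1 := ((hco q _ t 1 (hqd t).hasDerivAt).sub_const (q s 1)).ofReal_comp
        have h2 := h0.add (h1.mul_const Complex.I)
        simp only [Complex.mk_eq_add_mul_I]
        exact h2
      · apply Complex.ext <;> simp
      · apply Complex.ext <;> simp [hper]
      · intro t ht h
        have : q t = q s := by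
          ext i
          have e0 := congrArg Complex.re h
          have e1 := congrArg Complex.im h
          simp at e0 e1
          fin_cases i
          · simpa using sub_eq_zero.1 e0
          · simpa using sub_eq_zero.1 e1
        have := inj_near L hL q hper hinj t s this
          (abs_lt.2 ⟨by linarith [ht.1], by linarith [ht.2]⟩)
        linarith [ht.1]
      · simp only [hdper]
      · have := EuclideanSpace.real_norm_sq_eq (deriv q s)
        rw [hunit, Fin.sum_univ_two] at this
        rw [← sq_eq_sq₀ (norm_nonneg _) zero_le_one, ← Complex.normSq_eq_norm_sq,
          Complex.normSq_apply]
        simp only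
        linarith
      · intro t ht
        have hne : q s ≠ q t := by
          intro h
          have := inj_near L hL q hper hinj t s h.symm
            (abs_lt.2 ⟨by linarith [ht.1], by linarith [ht.2]⟩)
          linarith [ht.1]
        rw [hkval s t hne, Complex.div_im, EuclideanSpace.real_norm_sq_eq, Fin.sum_univ_two,
          Complex.normSq_apply]
        simp only [PiLp.sub_apply]
        rw [← sub_div, ← neg_div]
        congr 1 <;> ring
  -- the minimum argument
  rintro ⟨lam, e, hlam, hec, hep, hpos, heig⟩
  obtain ⟨s, -, hs⟩ := isCompact_Icc.exists_isMinOn (Set.nonempty_Icc.2 hL.le) hec.continuousOn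
  have hmin : ∀ t ∈ Set.Icc 0 L, e s ≤ e t := fun t ht => hs ht
  have h1 : (∫ t in (0:ℝ)..L, -ktil s t * e s) ≤ ∫ t in (0:ℝ)..L, -ktil s t * e t := by
    refine intervalIntegral.integral_mono_on hL.le
      (((hk1 s).neg.mul continuous_const).intervalIntegrable _ _)
      (((hk1 s).neg.mul hec).intervalIntegrable _ _) fun t ht => ?_
    exact mul_le_mul_of_nonneg_left (hmin t ht) (by linarith [hkneg s t])
  rw [intervalIntegral.integral_mul_const] at h1
  have h2 : (∫ t in (0:ℝ)..L, -ktil s t * e t) = -(π * (lam * e s)) := by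
    rw [heig s]
    simp only [neg_mul, intervalIntegral.integral_neg]
    field_simp
  rw [h2] at h1
  have h3 : π * e s ≤ -(π * (lam * e s)) :=
    (mul_le_mul_of_nonneg_right (hang s) (hpos s).le).trans h1
  have h4 : 0 < π * e s := mul_pos Real.pi_pos (hpos s)
  have h5 := (abs_lt.1 hlam).1
  nlinarith [mul_pos h4 (by linarith : 0 < 1 + lam)]
end

section
/- Let R > 0, c ∈ ℝ², L = 2πR and q(s) = c + R·(cos(s/R), sin(s/R)) parametrize the circle of radius R. For every closed subset A of the circle {x : ‖x − c‖ = R} with A ≠ the whole circle, there exists a continuous L-periodic function e : ℝ → ℝ, not identically zero, such that ∫₀^L e(t) dt = 0, e(s) = 0 whenever q(s) ∈ A, and (1/π) ∫₀^L k(s,t) e(t) dt = 0 for all s; that is, e is a nonzero eigenfunction of the double layer potential with eigenvalue 0 whose nodal set contains A. -/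
open Real Filter Topology MeasureTheory intervalIntegral

/-- On the circle, for every proper closed subset `A` of the circle there is a nonzero
continuous mean-zero eigenfunction of the double layer potential with eigenvalue `0`
whose nodal set contains `A`. -/
theorem circle_eigenfunction_vanishing_on_closed_set
    (R : ℝ) (hR : 0 < R) (c : EuclideanSpace ℝ (Fin 2)) (L : ℝ) (hL : L = 2 * π * R)
    (q : ℝ → EuclideanSpace ℝ (Fin 2))
    (hq0 : ∀ s : ℝ, q s 0 = c 0 + R * Real.cos (s / R))
    (hq1 : ∀ s : ℝ, q s 1 = c 1 + R * Real.sin (s / R))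
    (ktil : ℝ → ℝ → ℝ)
    (hcont : Continuous (fun p : ℝ × ℝ => ktil p.1 p.2))
    (hoff : ∀ s t, q s ≠ q t → ktil s t = dlKernel q s t)
    (hdiag : ∀ t, ktil t t = dlDiag q t)
    (A : Set (EuclideanSpace ℝ (Fin 2)))
    (hAclosed : IsClosed A)
    (hAsub : A ⊆ Metric.sphere c R)
    (hAne : A ≠ Metric.sphere c R) :
    ∃ e : ℝ → ℝ, Continuous e ∧ (∀ t, e (t + L) = e t) ∧ (∃ s, e s ≠ 0) ∧
      (∫ t in (0:ℝ)..L, e t) = 0 ∧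
      (∀ s : ℝ, q s ∈ A → e s = 0) ∧
      (∀ s : ℝ, ((1 / π) * ∫ t in (0:ℝ)..L, ktil s t * e t) = 0) := by
  have hRne : R ≠ 0 := hR.ne'
  have hLpos : 0 < L := by rw [hL]; positivity
  have hd0 : ∀ t, HasDerivAt (fun s => q s 0) (-Real.sin (t / R)) t := by
    intro t
    simp only [hq0]
    have h := (((hasDerivAt_id t).div_const R).cos.const_mul R).const_add (c 0)
    refine h.congr_deriv ?_
    simp only [id]
    field_simp
  have hd1 : ∀ t, HasDerivAt (fun s => q s 1) (Real.cos (t / R)) t := by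
    intro t
    simp only [hq1]
    have h := (((hasDerivAt_id t).div_const R).sin.const_mul R).const_add (c 1)
    refine h.congr_deriv ?_
    simp only [id]
    field_simp
  have hdiff : ∀ t, DifferentiableAt ℝ q t := by
    intro t
    rw [differentiableAt_euclidean]
    intro i
    fin_cases i
    · exact (hd0 t).differentiableAt
    · exact (hd1 t).differentiableAt
  have hcoord : ∀ t i, HasDerivAt (fun s => q s i) (deriv q t i) t := by
    intro t i
    exact (EuclideanSpace.proj i : EuclideanSpace ℝ (Fin 2) →L[ℝ] ℝ).hasFDerivAt.comp_hasDerivAt t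
      (hdiff t).hasDerivAt
  have he0 : ∀ t, deriv q t 0 = -Real.sin (t / R) := fun t => (hcoord t 0).unique (hd0 t)
  have he1 : ∀ t, deriv q t 1 = Real.cos (t / R) := fun t => (hcoord t 1).unique (hd1 t)
  have hqc : Continuous q := continuous_iff_continuousAt.2 fun t => (hdiff t).continuousAt
  have hker : ∀ s t, q s ≠ q t → ktil s t = -(1 / (2 * R)) := by
    intro s t hst
    rw [hoff s t hst]
    have hn : ‖q s - q t‖ ^ 2 ≠ 0 := pow_ne_zero _ (norm_ne_zero_iff.2 (sub_ne_zero.2 hst))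
    unfold dlKernel
    rw [div_eq_iff hn, EuclideanSpace.norm_sq_eq, Fin.sum_univ_two]
    simp only [PiLp.sub_apply, Real.norm_eq_abs, sq_abs, hq0, hq1, he0, he1]
    have h1 := Real.sin_sq_add_cos_sq (s / R)
    have h2 := Real.sin_sq_add_cos_sq (t / R)
    field_simp
    linear_combination R ^ 2 * (h1 - h2)
  have hper : ∀ t, q (t + L) = q t := by
    intro t
    have ht : (t + L) / R = t / R + 2 * π := by rw [hL]; field_simp
    ext i
    fin_cases i
    · simp [hq0, ht]
    · simp [hq1, ht]
  have hcount : ∀ s, {t | q s = q t}.Countable := by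
    intro s
    refine (Set.countable_range (fun k : ℤ => s + 2 * π * k * R)).mono ?_
    intro t ht
    have ht : q s = q t := ht
    have h0 : q s 0 = q t 0 := by rw [ht]
    have h1 : q s 1 = q t 1 := by rw [ht]
    rw [hq0, hq0] at h0
    rw [hq1, hq1] at h1
    have h0 := mul_left_cancel₀ hRne (add_left_cancel h0)
    have h1 := mul_left_cancel₀ hRne (add_left_cancel h1)
    obtain ⟨k, hk⟩ := Real.Angle.angle_eq_iff_two_pi_dvd_sub.1
      (Real.Angle.cos_sin_inj h0.symm h1.symm)
    refine ⟨k, ?_⟩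
    simp only
    rw [← hk]
    field_simp
    ring
  obtain ⟨p, hpS, hpA⟩ : ∃ p, p ∈ Metric.sphere c R ∧ p ∉ A := by
    by_contra! h
    exact hAne (Set.Subset.antisymm hAsub h)
  obtain ⟨s₀, hs₀⟩ : ∃ s₀, q s₀ = p := by
    let z : ℂ := ⟨p 0 - c 0, p 1 - c 1⟩
    have hz : ‖z‖ = R := by
      rw [← Metric.mem_sphere.1 hpS, EuclideanSpace.dist_eq, Fin.sum_univ_two, Complex.norm_def,
        Complex.normSq_apply]
      simp [z, Real.dist_eq, sq_abs, ← pow_two]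
    refine ⟨Complex.arg z * R, ?_⟩
    have hc := Complex.norm_mul_cos_arg z
    have hs := Complex.norm_mul_sin_arg z
    rw [hz] at hc hs
    ext i
    fin_cases i
    · simp [hq0, hRne, hc, z]
    · simp [hq1, hRne, hs, z]
  have hne : q s₀ ≠ q (s₀ + π * R) := by
    intro h
    have h0 : q s₀ 0 = q (s₀ + π * R) 0 := by rw [← h]
    have h1 : q s₀ 1 = q (s₀ + π * R) 1 := by rw [← h]
    have ht : (s₀ + π * R) / R = s₀ / R + π := by field_simp
    rw [hq0, hq0, ht, Real.cos_add_pi] at h0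
    rw [hq1, hq1, ht, Real.sin_add_pi] at h1
    have h0 := mul_left_cancel₀ hRne (add_left_cancel h0)
    have h1 := mul_left_cancel₀ hRne (add_left_cancel h1)
    have h3 := Real.sin_sq_add_cos_sq (s₀ / R)
    have h4 : Real.cos (s₀ / R) = 0 := by linarith
    have h5 : Real.sin (s₀ / R) = 0 := by linarith
    rw [h4, h5] at h3
    norm_num at h3
  set B : Set (EuclideanSpace ℝ (Fin 2)) := A ∪ {q (s₀ + π * R)} with hB
  have hBc : IsClosed B := hAclosed.union isClosed_singleton
  have hBn : B.Nonempty := ⟨_, Or.inr rfl⟩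
  have hpB : q s₀ ∉ B := by
    rintro (h | h)
    · exact hpA (hs₀ ▸ h)
    · exact hne h
  obtain ⟨f, hf⟩ : ∃ f : ℝ → ℝ, f = fun t => Metric.infDist (q t) B := ⟨_, rfl⟩
  have hfc : Continuous f := by rw [hf]; exact (Metric.continuous_infDist_pt B).comp hqc
  have hfper : Function.Periodic f L := by intro t; simp only [hf, hper]
  have hfpos : 0 < f s₀ := by rw [hf]; exact (hBc.notMem_iff_infDist_pos hBn).1 hpB
  have hfz : ∀ t, q t ∈ B → f t = 0 := by
    intro t ht; rw [hf]; exact Metric.infDist_zero_of_mem ht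
  have hfnn : ∀ t, 0 ≤ f t := by intro t; rw [hf]; exact Metric.infDist_nonneg
  have hapos : 0 < ∫ t in (0:ℝ)..L, f t := by
    have h := hfper.intervalIntegral_add_eq 0 s₀
    rw [zero_add] at h
    rw [h]
    exact intervalIntegral.integral_pos (by linarith) hfc.continuousOn (fun t _ => hfnn t)
      ⟨s₀, ⟨le_rfl, by linarith⟩, hfpos⟩
  obtain ⟨a, ha⟩ : ∃ a, a = ∫ t in (0:ℝ)..L, f t := ⟨_, rfl⟩
  obtain ⟨b, hb⟩ : ∃ b, b = ∫ t in (0:ℝ)..L, f t * f t := ⟨_, rfl⟩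
  rw [← ha] at hapos
  have hint : (∫ t in (0:ℝ)..L, (a * (f t * f t) - b * f t)) = 0 := by
    rw [intervalIntegral.integral_sub
      (Continuous.intervalIntegrable (by fun_prop) _ _)
      (Continuous.intervalIntegrable (by fun_prop) _ _),
      intervalIntegral.integral_const_mul, intervalIntegral.integral_const_mul, ← ha, ← hb]
    ring
  refine ⟨fun t => a * (f t * f t) - b * f t, by fun_prop, ?_, ?_, hint, ?_, ?_⟩
  · intro t
    simp only [hfper t]
  · by_contra! h
    have h1 := h s₀
    have hz : f (s₀ + π * R) = 0 := hfz _ (Or.inr rfl)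
    obtain ⟨u, hu⟩ : f s₀ / 2 ∈ Set.range f :=
      mem_range_of_exists_le_of_exists_ge hfc ⟨s₀ + π * R, by rw [hz]; linarith⟩
        ⟨s₀, by linarith⟩
    have h2 := h u
    rw [hu] at h2
    have h3 : a * (f s₀ * f s₀) = 0 := by linear_combination 2 * h1 - 4 * h2
    have : 0 < a * (f s₀ * f s₀) := by positivity
    linarith
  · intro s hs
    simp only [hfz s (Or.inl hs)]
    ring
  · intro s
    have h : (∫ t in (0:ℝ)..L, ktil s t * (a * (f t * f t) - b * f t)) =
        ∫ t in (0:ℝ)..L, -(1 / (2 * R)) * (a * (f t * f t) - b * f t) := by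
      apply intervalIntegral.integral_congr_ae
      have := (hcount s).ae_notMem volume
      filter_upwards [this] with t ht _
      rw [hker s t ht]
    rw [h, intervalIntegral.integral_const_mul, hint]
    simp
end

section
/- Let p > 1 be a real number and for each l ∈ ℕ let λ_{1,l}, …, λ_{2l+1,l} be real numbers with ∑_{k=1}^{2l+1} λ_{k,l} = −1. If the family (|λ_{k,l}|^{2p})_{l,k} is summable, then ∑_{l=0}^∞ ∑_{k=1}^{2l+1} |λ_{k,l}|^{2p} ≥ ∑_{l=0}^∞ (2l+1)^{1−2p}, and equality holds if and only if λ_{k,l} = −1/(2l+1) for all k and l. -/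
open Real Filter Topology

theorem tangent_lt (q y : ℝ) (hq : 1 < q) (hy : y ≠ -1) : 1 + q * (-y - 1) < |y| ^ q := by
  by_cases h : |y| = 1
  · rcases eq_or_eq_neg_of_abs_eq h with h1 | h1
    · subst h1
      rw [h, Real.one_rpow]
      linarith
    · exact absurd h1 hy
  · have h1 := one_add_mul_self_lt_rpow_one_add (s := |y| - 1)
      (by linarith [abs_nonneg y]) (sub_ne_zero.mpr h) hq
    rw [add_sub_cancel] at h1
    refine lt_of_le_of_lt ?_ h1
    have := neg_abs_le y
    have h2 : q * (-y - 1) ≤ q * (|y| - 1) :=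
      mul_le_mul_of_nonneg_left (by linarith) (by linarith)
    linarith

theorem tangent_le (q y : ℝ) (hq : 1 < q) : 1 + q * (-y - 1) ≤ |y| ^ q := by
  by_cases hy : y = -1
  · subst hy; simp
  · exact (tangent_lt q y hq hy).le

theorem scale_eq (n x q : ℝ) (hn : 0 < n) : |x| ^ q = n ^ (-q) * |n * x| ^ q := by
  rw [abs_mul, abs_of_pos hn, Real.mul_rpow hn.le (abs_nonneg x), ← mul_assoc,
    ← Real.rpow_add hn]
  simp

theorem base_eq (l : ℕ) (q : ℝ) (f : Fin (2 * l + 1) → ℝ) (hf : ∑ k, f k = -1) :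
    (2 * (l : ℝ) + 1) ^ (1 - q) = (2 * (l : ℝ) + 1) ^ (-q) *
      ∑ k, (1 + q * (-((2 * (l : ℝ) + 1) * f k) - 1)) := by
  have hn : (0 : ℝ) < 2 * (l : ℝ) + 1 := by positivity
  have : ∑ k, (1 + q * (-((2 * (l : ℝ) + 1) * f k) - 1)) = 2 * (l : ℝ) + 1 := by
    simp only [Finset.sum_add_distrib, ← Finset.mul_sum, Finset.sum_sub_distrib,
      Finset.sum_neg_distrib, hf]
    simp
  rw [this, sub_eq_neg_add, Real.rpow_add hn, Real.rpow_one]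

theorem level_le (l : ℕ) (q : ℝ) (hq : 1 < q) (f : Fin (2 * l + 1) → ℝ)
    (hf : ∑ k, f k = -1) : (2 * (l : ℝ) + 1) ^ (1 - q) ≤ ∑ k, |f k| ^ q := by
  have hn : (0 : ℝ) < 2 * (l : ℝ) + 1 := by positivity
  rw [base_eq l q f hf, Finset.sum_congr rfl (fun k _ => scale_eq _ (f k) q hn),
    ← Finset.mul_sum]
  exact mul_le_mul_of_nonneg_left (Finset.sum_le_sum fun k _ => tangent_le _ _ hq)
    (by positivity)

theorem level_lt (l : ℕ) (q : ℝ) (hq : 1 < q) (f : Fin (2 * l + 1) → ℝ)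
    (hf : ∑ k, f k = -1) (k : Fin (2 * l + 1)) (hk : f k ≠ -1 / (2 * (l : ℝ) + 1)) :
    (2 * (l : ℝ) + 1) ^ (1 - q) < ∑ k, |f k| ^ q := by
  have hn : (0 : ℝ) < 2 * (l : ℝ) + 1 := by positivity
  rw [base_eq l q f hf, Finset.sum_congr rfl (fun k _ => scale_eq _ (f k) q hn),
    ← Finset.mul_sum]
  refine mul_lt_mul_of_pos_left (Finset.sum_lt_sum (fun k _ => tangent_le _ _ hq)
    ⟨k, Finset.mem_univ k, tangent_lt _ _ hq ?_⟩) (by positivity)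
  intro h
  apply hk
  rw [eq_div_iff hn.ne', mul_comm, h]

/-- Let `p > 1` and for each `l ∈ ℕ` let `λ_{1,l}, …, λ_{2l+1,l}` be reals summing to `−1`.
If the family `|λ_{k,l}|^{2p}` is summable, then
`∑_l ∑_k |λ_{k,l}|^{2p} ≥ ∑_l (2l+1)^{1−2p}`, with equality iff `λ_{k,l} = −1/(2l+1)`
for all `k`, `l`. -/
theorem lame_eigenvalue_schatten_bound
    (p : ℝ) (hp : 1 < p)
    (lam : (l : ℕ) → Fin (2 * l + 1) → ℝ)
    (hsum : ∀ l : ℕ, (∑ k : Fin (2 * l + 1), lam l k) = -1)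
    (hsummable : Summable (fun x : Σ l : ℕ, Fin (2 * l + 1) => |lam x.1 x.2| ^ (2 * p))) :
    ((∑' l : ℕ, (2 * (l : ℝ) + 1) ^ (1 - 2 * p))
        ≤ ∑' x : Σ l : ℕ, Fin (2 * l + 1), |lam x.1 x.2| ^ (2 * p)) ∧
    ((∑' x : Σ l : ℕ, Fin (2 * l + 1), |lam x.1 x.2| ^ (2 * p))
        = (∑' l : ℕ, (2 * (l : ℝ) + 1) ^ (1 - 2 * p)) ↔
      ∀ (l : ℕ) (k : Fin (2 * l + 1)), lam l k = -1 / (2 * (l : ℝ) + 1)) := by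
  have hq : 1 < 2 * p := by linarith
  have hS : Summable (fun l : ℕ => ∑ k : Fin (2 * l + 1), |lam l k| ^ (2 * p)) := by
    simpa [tsum_fintype] using hsummable.sigma
  have hT : ∑' x : Σ l : ℕ, Fin (2 * l + 1), |lam x.1 x.2| ^ (2 * p)
      = ∑' l : ℕ, ∑ k : Fin (2 * l + 1), |lam l k| ^ (2 * p) := by
    rw [hsummable.tsum_sigma]
    simp only [tsum_fintype]
  have hle : ∀ l : ℕ, (2 * (l : ℝ) + 1) ^ (1 - 2 * p) ≤ ∑ k, |lam l k| ^ (2 * p) :=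
    fun l => level_le l _ hq _ (hsum l)
  have hR : Summable (fun l : ℕ => (2 * (l : ℝ) + 1) ^ (1 - 2 * p)) :=
    Summable.of_nonneg_of_le (fun l => by positivity) hle hS
  rw [hT]
  refine ⟨hR.tsum_le_tsum hle hS, ?_, ?_⟩
  · intro h l k
    by_contra hk
    have := hR.tsum_lt_tsum hle (level_lt l _ hq _ (hsum l) k hk) hS
    exact this.ne' h
  · intro h
    refine tsum_congr fun l => ?_
    have hn : (0 : ℝ) < 2 * (l : ℝ) + 1 := by positivity
    have : ∀ k, |lam l k| ^ (2 * p) = (2 * (l : ℝ) + 1) ^ (-(2 * p)) := by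
      intro k
      rw [scale_eq _ _ _ hn, h l k, mul_div_cancel₀ _ hn.ne']
      simp
    rw [Finset.sum_congr rfl (fun k _ => this k), sub_eq_add_neg, Real.rpow_add hn,
      Real.rpow_one]
    simp
end
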